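/- arXiv:1609.08751 — 2 statements merged into one kernel-verified Lean document; each statement's English description precedes it below -/
import Mathlib

section
/- Let d ≥ 2 and λ ∈ [0,1). Define F : Δ → ℝ by F(x) = ½‖x − λe₂‖² − λ log(1 + √(1 − x₁²)) + λ√(1 − x₁²) + (λ−1) log x₁, T x = (x₁/‖x‖) e₁ + ((1 − 1/‖x‖) x₂ + λ) e₂ + (1 − 1/‖x‖) ∑_{j=3}^d x_j e_j, and x* = √(1−λ²) e₁ + λ e₂. Then for x ∈ Δ one has F(T x) = F(x) if and only if x = x*. -/
noncomputable section

open Metric Set Filter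

/-- Euclidean space `ℝ^d` with `d = d' + 2 ≥ 2`. -/
abbrev Euc (d : ℕ) := EuclideanSpace ℝ (Fin (d + 2))

/-- The standard basis vectors. -/
def e (d : ℕ) (j : Fin (d + 2)) : Euc d := EuclideanSpace.single j 1

/-- The Douglas–Rachford operator for the unit sphere and the line
`L_λ = {t e₁ + λ e₂}`, given by its explicit formula
`T x = (x₁/‖x‖) e₁ + ((1 − 1/‖x‖) x₂ + λ) e₂ + (1 − 1/‖x‖) ∑_{j=3}^d x_j e_j`. -/
def DR (d : ℕ) (lam : ℝ) (x : Euc d) : Euc d :=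
  (x 0 / ‖x‖) • e d 0 + ((1 - 1 / ‖x‖) * x 1 + lam) • e d 1 +
    ∑ j ∈ Finset.univ.filter (fun j : Fin (d + 2) => 2 ≤ (j : ℕ)),
      ((1 - 1 / ‖x‖) * x j) • e d j

/-- The intersection point `x* = √(1−λ²) e₁ + λ e₂`. -/
def xStar (d : ℕ) (lam : ℝ) : Euc d := Real.sqrt (1 - lam ^ 2) • e d 0 + lam • e d 1

/-- The Lyapunov-type function of Benoist:
`F(x) = ½‖x − λe₂‖² − λ log(1 + √(1 − x₁²)) + λ√(1 − x₁²) + (λ−1) log x₁`. -/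
def F (d : ℕ) (lam : ℝ) (x : Euc d) : ℝ :=
  (1 / 2) * ‖x - lam • e d 1‖ ^ 2 - lam * Real.log (1 + Real.sqrt (1 - (x 0) ^ 2)) +
    lam * Real.sqrt (1 - (x 0) ^ 2) + (lam - 1) * Real.log (x 0)

/-- `Δ = {x : 0 < x₁ ≤ 1}`. -/
def Delta (d : ℕ) : Set (Euc d) := {x | 0 < x 0 ∧ x 0 ≤ 1}

def drG (l s : ℝ) : ℝ := l * (s - Real.log (1 + s)) + (l - 1) / 2 * Real.log (1 - s ^ 2)

def drM (s : ℝ) : ℝ := s / Real.sqrt (1 - s ^ 2)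

def drD (l t s : ℝ) : ℝ :=
  (l ^ 2 - s ^ 2) / 2 + Real.sqrt (1 - s ^ 2) * (drM t * (t - l)) + drG l s - drG l t

def drD' (l t s : ℝ) : ℝ := drM s * (drM t * (l - t) - drM s * (l - s))

lemma drM_sq {s : ℝ} (h0 : 0 ≤ s) (h1 : s < 1) : drM s ^ 2 = s ^ 2 / (1 - s ^ 2) := by
  have : 0 ≤ 1 - s ^ 2 := by nlinarith
  rw [drM, div_pow, Real.sq_sqrt this]

lemma drM_nonneg {s : ℝ} (h0 : 0 ≤ s) : 0 ≤ drM s := by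
  unfold drM; positivity

lemma drM_pos {s : ℝ} (h0 : 0 < s) (h1 : s < 1) : 0 < drM s := by
  have : 0 < 1 - s ^ 2 := by nlinarith
  unfold drM; positivity

lemma drM_mono {s t : ℝ} (h0 : 0 ≤ s) (h : s ≤ t) (h1 : t < 1) : drM s ≤ drM t := by
  have : 0 < 1 - t ^ 2 := by nlinarith
  have h2 : 0 < 1 - s ^ 2 := by nlinarith
  unfold drM
  have h3 : Real.sqrt (1 - t ^ 2) ≤ Real.sqrt (1 - s ^ 2) := Real.sqrt_le_sqrt (by nlinarith)
  have h4 := Real.sqrt_pos.mpr this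
  gcongr
  linarith

lemma drD_hasDeriv {l t s : ℝ} (h0 : 0 ≤ s) (h1 : s < 1) :
    HasDerivAt (drD l t) (drD' l t s) s := by
  have hp : 0 < 1 - s ^ 2 := by nlinarith
  have hq : HasDerivAt (fun s : ℝ => 1 - s ^ 2) (-(2 * s)) s := by
    simpa using ((hasDerivAt_id s).pow 2).const_sub 1
  have hs := hq.sqrt hp.ne'
  have hl := hq.log hp.ne'
  have hl1 : HasDerivAt (fun s : ℝ => Real.log (1 + s)) (1 / (1 + s)) s :=
    ((hasDerivAt_id s).const_add 1).log (by simp; linarith)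
  have hsq : HasDerivAt (fun s : ℝ => (l ^ 2 - s ^ 2) / 2) (-s) s := by
    have := (((hasDerivAt_id s).pow 2).const_sub (l ^ 2)).div_const 2
    refine this.congr_deriv ?_
    simp; ring
  have hG : HasDerivAt (drG l) (l * (1 - 1 / (1 + s)) + (l - 1) / 2 * (-(2 * s) / (1 - s ^ 2))) s :=
    (((hasDerivAt_id s).sub hl1).const_mul l).add (hl.const_mul ((l - 1) / 2))
  have := ((hsq.add (hs.mul_const (drM t * (t - l)))).add hG).sub_const (drG l t)
  refine this.congr_deriv ?_
  symm
  have e1 : drD' l t s = drM s * (drM t * (l - t)) - drM s ^ 2 * (l - s) := by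
    unfold drD'; ring
  rw [e1, drM_sq h0 h1]
  have hr := Real.sqrt_pos.mpr hp
  have e2 : drM s = s / Real.sqrt (1 - s ^ 2) := rfl
  rw [e2]
  have h3 : 1 + s ≠ 0 := by linarith
  have h4 : 1 - s ≠ 0 := by linarith
  have h5 : 1 - s ^ 2 = (1 + s) * (1 - s) := by ring
  generalize Real.sqrt (1 - s ^ 2) = w at *
  rw [h5]
  field_simp
  ring

lemma drD_self {l t : ℝ} (h0 : 0 ≤ t) (h1 : t < 1) : drD l t t = (l - t) ^ 2 / 2 := by
  have hp : 0 < 1 - t ^ 2 := by nlinarith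
  have hr := Real.sqrt_pos.mpr hp
  have : Real.sqrt (1 - t ^ 2) * drM t = t := by unfold drM; field_simp
  unfold drD
  rw [← mul_assoc, this]; ring

lemma dr_mono {l t a b : ℝ} (K : ℝ) (c : ℝ) (ha : 0 ≤ a) (hab : a ≤ b) (hb : b < 1)
    (h : ∀ x, a < x → x < b → 0 ≤ drD' l t x + K * (x - c)) :
    drD l t a + K * (a - c) ^ 2 / 2 ≤ drD l t b + K * (b - c) ^ 2 / 2 := by
  have hd : ∀ x, 0 ≤ x → x < 1 →
      HasDerivAt (fun x => drD l t x + K * (x - c) ^ 2 / 2) (drD' l t x + K * (x - c)) x := by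
    intro x hx hx1
    have h2 : HasDerivAt (fun x => K * (x - c) ^ 2 / 2) (K * (x - c)) x := by
      have := ((((hasDerivAt_id x).sub_const c).pow 2).const_mul K).div_const 2
      refine this.congr_deriv ?_
      simp; ring
    exact (drD_hasDeriv hx hx1).add h2
  have : MonotoneOn (fun x => drD l t x + K * (x - c) ^ 2 / 2) (Set.Icc a b) := by
    apply monotoneOn_of_deriv_nonneg (convex_Icc a b)
    · intro x hx
      exact (hd x (by linarith [hx.1]) (by linarith [hx.2])).continuousAt.continuousWithinAt
    · intro x hx
      rw [interior_Icc] at hx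
      exact (hd x (by linarith [hx.1]) (by linarith [hx.2])).differentiableAt.differentiableWithinAt
    · intro x hx
      rw [interior_Icc] at hx
      rw [(hd x (by linarith [hx.1]) (by linarith [hx.2])).deriv]
      exact h x hx.1 hx.2
  exact this ⟨le_refl _, hab⟩ ⟨hab, le_refl _⟩ hab

lemma dr_mono0 {l t a b : ℝ} (ha : 0 ≤ a) (hab : a ≤ b) (hb : b < 1)
    (h : ∀ x, a < x → x < b → 0 ≤ drD' l t x) : drD l t a ≤ drD l t b := by
  have := dr_mono (l := l) (t := t) 0 0 ha hab hb (by simpa using h)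
  simpa using this

lemma dr_anti {l t a b : ℝ} (K : ℝ) (ha : 0 ≤ a) (hab : a ≤ b) (hb : b < 1)
    (h : ∀ x, a < x → x < b → drD' l t x ≤ K) :
    drD l t b - K * b ≤ drD l t a - K * a := by
  have hd : ∀ x, 0 ≤ x → x < 1 →
      HasDerivAt (fun x => drD l t x - K * x) (drD' l t x - K) x := by
    intro x hx hx1
    have h2 : HasDerivAt (fun x => K * x) K x := by
      simpa using (hasDerivAt_id x).const_mul K
    exact (drD_hasDeriv hx hx1).sub h2
  have : AntitoneOn (fun x => drD l t x - K * x) (Set.Icc a b) := by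
    apply antitoneOn_of_deriv_nonpos (convex_Icc a b)
    · intro x hx
      exact (hd x (by linarith [hx.1]) (by linarith [hx.2])).continuousAt.continuousWithinAt
    · intro x hx
      rw [interior_Icc] at hx
      exact (hd x (by linarith [hx.1]) (by linarith [hx.2])).differentiableAt.differentiableWithinAt
    · intro x hx
      rw [interior_Icc] at hx
      rw [(hd x (by linarith [hx.1]) (by linarith [hx.2])).deriv]
      linarith [h x hx.1 hx.2]
  exact this ⟨le_refl _, hab⟩ ⟨hab, le_refl _⟩ hab

lemma dr_anti0 {l t a b : ℝ} (ha : 0 ≤ a) (hab : a ≤ b) (hb : b < 1)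
    (h : ∀ x, a < x → x < b → drD' l t x ≤ 0) : drD l t b ≤ drD l t a := by
  have := dr_anti (l := l) (t := t) 0 ha hab hb h
  simpa using this

/-- case t ≥ l -/
lemma dr_case1 {l t s : ℝ} (hl : 0 ≤ l) (hlt : l ≤ t) (ht : t < 1) (hs0 : 0 ≤ s) (hs : s < 1) :
    (l - t) ^ 2 / 2 ≤ drD l t s := by
  have ht0 : 0 ≤ t := hl.trans hlt
  rw [← drD_self ht0 ht]
  rcases le_total t s with h | h
  · apply dr_mono0 ht0 h hs
    intro x hx hx1
    unfold drD'
    have hm := drM_mono ht0 hx.le (by linarith)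
    have h2 : drM t * (t - l) ≤ drM x * (x - l) :=
      mul_le_mul hm (by linarith) (by linarith) (drM_nonneg (by linarith))
    exact mul_nonneg (drM_nonneg (by linarith)) (by nlinarith)
  · apply dr_anti0 hs0 h ht
    intro x hx hx1
    unfold drD'
    have hm := drM_mono (s := x) (t := t) (by linarith) hx1.le ht
    have hx0 := drM_nonneg (s := x) (by linarith)
    have ht0 := drM_nonneg ht0
    apply mul_nonpos_of_nonneg_of_nonpos hx0
    rcases le_total l x with h3 | h3
    · have h2 : drM x * (x - l) ≤ drM t * (t - l) :=
        mul_le_mul hm (by linarith) (by linarith) ht0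
      nlinarith
    · nlinarith [mul_nonneg hx0 (sub_nonneg.2 h3), mul_nonneg ht0 (sub_nonneg.2 hlt)]

lemma dr_strict {l s : ℝ} (hl : 0 ≤ l) (hl1 : l < 1) (hs0 : 0 ≤ s) (hs : s < 1) (hne : s ≠ l) :
    0 < drD l l s := by
  have e0 : drD l l l = 0 := by rw [drD_self hl hl1]; simp
  rw [← e0]
  rcases lt_or_gt_of_ne hne with h | h
  · have : StrictAntiOn (drD l l) (Set.Icc s l) := by
      apply strictAntiOn_of_deriv_neg (convex_Icc s l)
      · intro x hx
        exact (drD_hasDeriv (by linarith [hx.1]) (by linarith [hx.2])).continuousAt.continuousWithinAt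
      · intro x hx
        rw [interior_Icc] at hx
        rw [(drD_hasDeriv (by linarith [hx.1]) (by linarith [hx.2])).deriv]
        unfold drD'
        have hp := drM_pos (s := x) (by linarith [hx.1]) (by linarith [hx.2])
        have := mul_pos (mul_pos hp hp) (sub_pos.2 hx.2)
        nlinarith
    exact this ⟨le_refl _, h.le⟩ ⟨h.le, le_refl _⟩ h
  · have : StrictMonoOn (drD l l) (Set.Icc l s) := by
      apply strictMonoOn_of_deriv_pos (convex_Icc l s)
      · intro x hx
        exact (drD_hasDeriv (by linarith [hx.1]) (by linarith [hx.2])).continuousAt.continuousWithinAt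
      · intro x hx
        rw [interior_Icc] at hx
        rw [(drD_hasDeriv (by linarith [hx.1]) (by linarith [hx.2])).deriv]
        unfold drD'
        have hp := drM_pos (s := x) (by linarith [hx.1]) (by linarith [hx.2])
        have := mul_pos (mul_pos hp hp) (sub_pos.2 hx.1)
        nlinarith
    exact this ⟨le_refl _, h.le⟩ ⟨h.le, le_refl _⟩ h

lemma dr_case2a {l t s : ℝ} (ht : 0 ≤ t) (hlt : t < l) (hl : l < 1) (hts : t ≤ s) (hs : s ≤ l) :
    0 < drD l t s := by
  have h1 : 0 < 1 - t ^ 2 := by nlinarith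
  have key := dr_mono (l := l) (t := t) ((l - t) / (2 * (1 - t ^ 2))) t ht hts (by linarith) (by
    intro x hx hx1
    have hxx : 0 < 1 - x ^ 2 := by nlinarith
    have e1 : drD' l t x = drM x * drM t * (l - t) - drM x ^ 2 * (l - x) := by
      unfold drD'; ring
    have e2 : x * t / (1 - t ^ 2) ≤ drM x * drM t := by
      have h3 : Real.sqrt (1 - x ^ 2) ≤ Real.sqrt (1 - t ^ 2) := Real.sqrt_le_sqrt (by nlinarith)
      have h4 := Real.sqrt_pos.mpr hxx
      have h5 := Real.sqrt_pos.mpr h1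
      have e3 : x * t / (1 - t ^ 2) = (x / Real.sqrt (1 - t ^ 2)) * drM t := by
        unfold drM
        rw [div_mul_div_comm, Real.mul_self_sqrt h1.le]
      rw [e3]
      apply mul_le_mul_of_nonneg_right _ (drM_nonneg ht)
      unfold drM
      have : 0 ≤ x := by linarith
      gcongr
    have e4 : drM x ^ 2 * (l - x) ≤ x ^ 2 / ((1 + x) * (1 - t)) * (l - t) := by
      rw [drM_sq (by linarith) (by linarith)]
      have a1 : 0 < 1 + x := by linarith
      have a2 : 0 < 1 - t := by linarith
      have a3 : 0 < 1 - x := by linarith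
      have : 1 - x ^ 2 = (1 + x) * (1 - x) := by ring
      rw [this, div_mul_eq_mul_div, div_mul_eq_mul_div, div_le_div_iff₀ (by positivity) (by positivity)]
      have : (l - x) * (1 - t) ≤ (l - t) * (1 - x) := by nlinarith
      have := mul_le_mul_of_nonneg_left this (show 0 ≤ x ^ 2 * (1 + x) by positivity)
      nlinarith
    have e5 : (l - t) / (2 * (1 - t ^ 2)) * (x - t) ≥
        (x ^ 2 / ((1 + x) * (1 - t)) - x * t / (1 - t ^ 2)) * (l - t) := by
      have a1 : 0 < 1 + x := by linarith
      have a2 : 0 < 1 - t := by linarith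
      have a3 : 0 < 1 + t := by linarith
      have a4 : (1 - t ^ 2) = (1 - t) * (1 + t) := by ring
      have : (l - t) / (2 * (1 - t ^ 2)) * (x - t) -
        (x ^ 2 / ((1 + x) * (1 - t)) - x * t / (1 - t ^ 2)) * (l - t) =
        (l - t) * (x - t) * (1 - x) / (2 * (1 - t) * (1 + t) * (1 + x)) := by
        rw [a4]; field_simp; ring
      have h6 : 0 ≤ (l - t) * (x - t) * (1 - x) / (2 * (1 - t) * (1 + t) * (1 + x)) := by
        apply div_nonneg
        · exact mul_nonneg (mul_nonneg (by linarith) (by linarith)) (by linarith)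
        · positivity
      linarith
    have e6 := mul_le_mul_of_nonneg_right e2 (show 0 ≤ l - t by linarith)
    rw [e1]; nlinarith)
  rw [drD_self ht (by linarith)] at key
  have : (l - t) / (2 * (1 - t ^ 2)) * (s - t) ^ 2 / 2 ≤ (l - t) ^ 2 / 4 := by
    rw [div_mul_eq_mul_div, div_div, div_le_div_iff₀ (by positivity) (by norm_num)]
    have b1 : (s - t) ^ 2 ≤ (l - t) * (1 - t ^ 2) := by
      have c1 : (s - t) ^ 2 ≤ (l - t) * (l - t) := by nlinarith
      have c2 : l - t ≤ 1 - t ^ 2 := by nlinarith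
      nlinarith
    have := mul_le_mul_of_nonneg_left b1 (show 0 ≤ l - t by linarith)
    nlinarith
  have : 0 < (l - t) ^ 2 := by have : 0 < l - t := by linarith
                               positivity
  simp at key
  linarith

lemma dr_case2 {l t s : ℝ} (ht : 0 ≤ t) (hlt : t < l) (hl : l < 1) (hts : t ≤ s) (hs : s < 1) :
    0 < drD l t s := by
  rcases le_total s l with h | h
  · exact dr_case2a ht hlt hl hts h
  · refine (dr_case2a ht hlt hl hlt.le le_rfl).trans_le ?_
    apply dr_mono0 (by linarith) h hs
    intro x hx hx1
    unfold drD'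
    have hx0 := drM_nonneg (s := x) (by linarith)
    have ht0 := drM_nonneg ht
    apply mul_nonneg hx0
    nlinarith [mul_nonneg hx0 (sub_nonneg.2 hx.le), mul_nonneg ht0 (sub_nonneg.2 hlt.le)]

lemma dr_case3 {l t s : ℝ} (hlt : t < l) (hl : l < 1) (hs : 0 ≤ s) (hst : s < t)
    (ht : t ^ 2 < 2 / 3) : 0 < drD l t s := by
  have ht0 : 0 < t := by linarith
  have h1 : 0 < 1 - t ^ 2 := by nlinarith
  have key := dr_anti (l := l) (t := t) ((l - t) ^ 2 * drM t ^ 2 / (4 * t)) hs hst.le (by linarith) (by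
    intro x hx hx1
    have hx0 : 0 < x := by linarith
    have hxx : 0 < 1 - x ^ 2 := by nlinarith
    have star : (drM t - drM x) ^ 2 * t ≤ drM t ^ 2 * (t - x) := by
      unfold drM
      have hw := Real.sqrt_pos.mpr hxx
      have hv := Real.sqrt_pos.mpr h1
      have hw2 := Real.sq_sqrt hxx.le
      have hv2 := Real.sq_sqrt h1.le
      have hvw : Real.sqrt (1 - t ^ 2) ≤ Real.sqrt (1 - x ^ 2) := Real.sqrt_le_sqrt (by nlinarith)
      generalize Real.sqrt (1 - x ^ 2) = w at *
      generalize Real.sqrt (1 - t ^ 2) = v at *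
      have c1 : t * (t - x) * (t + x) ^ 2 ≤ v ^ 2 * (w + v) ^ 2 := by
        have d1 : w ^ 2 + 3 * v ^ 2 ≤ (w + v) ^ 2 := by nlinarith
        have d2 : v ^ 2 * (w ^ 2 + 3 * v ^ 2) ≤ v ^ 2 * (w + v) ^ 2 := by gcongr
        have d3 : (2 - x ^ 2) / 3 ≤ v ^ 2 * (w ^ 2 + 3 * v ^ 2) := by
          rw [hv2, hw2]; nlinarith
        have d4 : t * (t - x) * (t + x) ^ 2 = (t ^ 2 - x ^ 2) * (t ^ 2 + t * x) := by ring
        have d5 : (t ^ 2 - x ^ 2) * (t ^ 2 + t * x) ≤ (2 / 3 - x ^ 2) * (1 + x ^ 2 / 2) := by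
          apply mul_le_mul
          · linarith
          · nlinarith [sq_nonneg (t - x)]
          · positivity
          · nlinarith
        nlinarith [sq_nonneg (x ^ 2), sq_nonneg x]
      have c2 : t * (w - v) ^ 2 ≤ (t - x) * v ^ 2 := by
        have d1 : (w - v) * (w + v) = (t - x) * (t + x) := by nlinarith
        have d2 : t * (w - v) ^ 2 * (w + v) ^ 2 ≤ (t - x) * v ^ 2 * (w + v) ^ 2 := by
          have : t * (w - v) ^ 2 * (w + v) ^ 2 = (t - x) * (t * (t - x) * (t + x) ^ 2) := by
            calc _ = t * ((w - v) * (w + v)) ^ 2 := by ring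
              _ = _ := by rw [d1]; ring
          rw [this]
          have := mul_le_mul_of_nonneg_left c1 (show 0 ≤ t - x by linarith)
          linarith
        exact le_of_mul_le_mul_right d2 (by positivity)
      have c3 : (t / v) ^ 2 * (t - x) - (t / v - x / w) ^ 2 * t =
          t * x * ((t - x) * v ^ 2 - t * (w - v) ^ 2) / (v ^ 2 * w ^ 2) := by
        field_simp; ring
      have c4 : 0 ≤ t * x * ((t - x) * v ^ 2 - t * (w - v) ^ 2) / (v ^ 2 * w ^ 2) := by
        apply div_nonneg _ (by positivity)
        exact mul_nonneg (by positivity) (by linarith)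
      linarith
    unfold drD'
    generalize drM t = n at *
    generalize drM x = m at *
    rw [le_div_iff₀ (by positivity)]
    have p : 0 < t - x := by linarith
    have q : (l - t) ^ 2 * ((n - m) ^ 2 * t) ≤ (l - t) ^ 2 * (n ^ 2 * (t - x)) := by gcongr
    have r : 0 ≤ t * (2 * m * (t - x) - (l - t) * (n - m)) ^ 2 := by positivity
    have u : (m * (n * (l - t) - m * (l - x)) * (4 * t)) * (t - x) ≤ ((l - t) ^ 2 * n ^ 2) * (t - x) := by
      nlinarith
    exact le_of_mul_le_mul_right u p)
  rw [drD_self ht0.le (by linarith), drM_sq ht0.le (by linarith)] at key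
  have hd : 0 < (l - t) ^ 2 := by have : 0 < l - t := by linarith
                                  positivity
  have e1 : (l - t) ^ 2 * (t ^ 2 / (1 - t ^ 2)) / (4 * t) * t = (l - t) ^ 2 * (t ^ 2 / (1 - t ^ 2)) / 4 := by
    field_simp
  have e2 : t ^ 2 / (1 - t ^ 2) < 2 := by rw [div_lt_iff₀ h1]; linarith
  have e3 : 0 ≤ (l - t) ^ 2 * (t ^ 2 / (1 - t ^ 2)) / (4 * t) * s := by positivity
  nlinarith

lemma dr_log {t : ℝ} (h : 2 / 3 ≤ t ^ 2) (h0 : 0 < t) (h1 : t < 1) :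
    t ^ 2 / 2 + drM t * (1 - t) < Real.log (1 + t) := by
  have ht : 0.8164 < t := by nlinarith
  have hp : 0 < 1 - t ^ 2 := by nlinarith
  have e1 : drM t * (1 - t) ≤ t * (0.15 + (1 - t) / (0.6 * (1 + t))) := by
    have hm : drM t * (1 - t) ≥ 0 := mul_nonneg (drM_nonneg h0.le) (by linarith)
    have hsq : (drM t * (1 - t)) ^ 2 = t ^ 2 * ((1 - t) / (1 + t)) := by
      rw [mul_pow, drM_sq h0.le h1]
      have : 1 - t ^ 2 = (1 - t) * (1 + t) := by ring
      have a : 1 - t ≠ 0 := by linarith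
      have b : 1 + t ≠ 0 := by linarith
      rw [this]; field_simp
    have hy : 0 ≤ (1 - t) / (1 + t) := div_nonneg (by linarith) (by linarith)
    have e2 : (1 - t) / (0.6 * (1 + t)) = ((1 - t) / (1 + t)) / 0.6 := by
      rw [div_div]; ring_nf
    rw [e2]
    generalize (1 - t) / (1 + t) = y at *
    apply abs_le_of_sq_le_sq' _ (by positivity) |>.2
    rw [hsq, mul_pow]
    apply mul_le_mul_of_nonneg_left _ (by positivity)
    have : (0.15 + y / 0.6) ^ 2 = (0.15 - y / 0.6) ^ 2 + y := by ring
    rw [this]; linarith [sq_nonneg (0.15 - y / 0.6)]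
  have e3 : Real.log (1 + t) = Real.log 2 / 2 + Real.log (1 + ((1 + t) / Real.sqrt 2 - 1)) := by
    have : 0 < Real.sqrt 2 := by positivity
    rw [← Real.log_sqrt (by norm_num), ← Real.log_mul (by positivity) (by simp; linarith)]
    congr 1; field_simp; ring
  have hr : Real.sqrt 2 < 1.41422 := by rw [Real.sqrt_lt' (by norm_num)]; norm_num
  have hr0 : 0 < Real.sqrt 2 := by positivity
  have e4 := Real.le_log_one_add_of_nonneg (x := (1 + t) / Real.sqrt 2 - 1)
    (by rw [sub_nonneg, le_div_iff₀ hr0]; linarith)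
  have e5 : 2 * (t - 0.41422) / (t + 2.41422) ≤
      2 * ((1 + t) / Real.sqrt 2 - 1) / ((1 + t) / Real.sqrt 2 - 1 + 2) := by
    have : 2 * ((1 + t) / Real.sqrt 2 - 1) / ((1 + t) / Real.sqrt 2 - 1 + 2) =
      2 * (1 + t - Real.sqrt 2) / (1 + t + Real.sqrt 2) := by
      have : 1 + t + Real.sqrt 2 ≠ 0 := by positivity
      have h3 : (1 + t) / Real.sqrt 2 - 1 + 2 = (1 + t + Real.sqrt 2) / Real.sqrt 2 := by
        field_simp; ring
      rw [h3]
      field_simp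
    rw [this, div_le_div_iff₀ (by linarith) (by positivity)]
    nlinarith
  have hl := Real.log_two_gt_d9
  have e6 : t ^ 2 / 2 + t * (0.15 + (1 - t) / (0.6 * (1 + t))) <
      0.34657 + 2 * (t - 0.41422) / (t + 2.41422) := by
    have : t ^ 2 / 2 + t * (0.15 + (1 - t) / (0.6 * (1 + t))) =
      (t ^ 2 / 2 * (0.6 * (1 + t)) + t * (0.15 * (0.6 * (1 + t)) + (1 - t))) / (0.6 * (1 + t)) := by
      have : 1 + t ≠ 0 := by linarith
      field_simp
    have h2 : 0.34657 + 2 * (t - 0.41422) / (t + 2.41422) =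
      (0.34657 * (t + 2.41422) + 2 * (t - 0.41422)) / (t + 2.41422) := by
      have : t + 2.41422 ≠ 0 := by linarith
      field_simp
    rw [this, h2, div_lt_div_iff₀ (by linarith) (by linarith)]
    obtain ⟨z, rfl⟩ : ∃ z, t = z + 0.8164 := ⟨t - 0.8164, by ring⟩
    have hz : 0 < z := by linarith
    have hz1 : z < 0.1836 := by linarith
    nlinarith [mul_pos hz (sub_pos.2 hz1), mul_pos (mul_pos hz hz) (sub_pos.2 hz1), pow_pos hz 3, pow_pos hz 2]
  linarith

lemma dr_zero {l t : ℝ} (hlt : t < l) (hl : l < 1) (ht0 : 0 < t) (ht : 2 / 3 ≤ t ^ 2) :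
    0 < drD l t 0 := by
  have hE := dr_case1 (l := t) (t := t) (s := 0) ht0.le le_rfl (by linarith) le_rfl (by norm_num)
  have hL := dr_log ht ht0 (by linarith)
  have hp : 0 < 1 - t ^ 2 := by nlinarith
  have hlog : Real.log (1 - t ^ 2) = Real.log (1 - t) + Real.log (1 + t) := by
    rw [← Real.log_mul (by linarith) (by linarith)]; congr 1; ring
  simp only [drD, drG] at *
  norm_num at *
  generalize Real.log (1 - t ^ 2) = A at *
  generalize Real.log (1 + t) = B at *
  generalize drM t = m at *
  -- (1-t) D(l) = (1-t)(l-t)^2/2 + (1-l) E + (l-t) L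
  have h1 : 0 < (1 - t) * ((l - t) ^ 2 / 2) := by
    have : 0 < l - t := by linarith
    have : 0 < 1 - t := by linarith
    positivity
  have h2 := mul_nonneg (show 0 ≤ 1 - l by linarith) (sub_nonneg.2 hE)
  have h3 := mul_pos (show 0 < l - t by linarith) (sub_pos.2 hL)
  have h4 : 0 < 1 - t := by linarith
  rw [← sub_pos]
  refine pos_of_mul_pos_right (a := 1 - t) ?_ h4.le
  nlinarith

lemma dr_case4 {l t s : ℝ} (hlt : t < l) (hl : l < 1) (hs : 0 ≤ s) (hst : s < t)
    (ht : 2 / 3 ≤ t ^ 2) : 0 < drD l t s := by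
  have ht0 : 0 < t := by linarith
  have ht8 : 0.816 < t := by nlinarith
  have hp : 0 < 1 - t ^ 2 := by nlinarith
  have hself : 0 < drD l t t := by
    rw [drD_self ht0.le (by linarith)]
    have : 0 < l - t := by linarith
    positivity
  have hinc : ∀ x y, 0 ≤ x → x ≤ y → y ≤ 0.405 → drM x * (l - x) ≤ drM y * (l - y) := by
    intro x y hx hxy hy
    have hxx : 0 < 1 - x ^ 2 := by nlinarith
    have hyy : 0 < 1 - y ^ 2 := by nlinarith
    have h4 := Real.sqrt_pos.mpr hyy
    have h3 : Real.sqrt (1 - y ^ 2) ≤ Real.sqrt (1 - x ^ 2) := Real.sqrt_le_sqrt (by nlinarith)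
    unfold drM
    rw [div_mul_eq_mul_div, div_mul_eq_mul_div]
    have : 0 ≤ y * (l - y) := mul_nonneg (by linarith) (by linarith)
    have : x * (l - x) ≤ y * (l - y) := by nlinarith
    gcongr
  have hbig : ∀ x, 0.405 ≤ x → x ≤ t → drM t * (l - t) ≤ drM x * (l - x) := by
    intro x hx hxt
    have a1 : drM t * (1 - t) ≤ drM x * (1 - x) := by
      have m0 : 0 ≤ drM x * (1 - x) := mul_nonneg (drM_nonneg (by linarith)) (by linarith)
      apply abs_le_of_sq_le_sq' _ m0 |>.2
      rw [mul_pow, mul_pow, drM_sq ht0.le (by linarith), drM_sq (by linarith) (by linarith)]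
      have f : ∀ z : ℝ, 0 ≤ z → z < 1 → z ^ 2 / (1 - z ^ 2) * (1 - z) ^ 2 = z ^ 2 * (1 - z) / (1 + z) := by
        intro z h0 h1
        have : 1 - z ^ 2 = (1 - z) * (1 + z) := by ring
        have a : 1 - z ≠ 0 := by linarith
        have b : 1 + z ≠ 0 := by linarith
        rw [this]; field_simp
      rw [f t ht0.le (by linarith), f x (by linarith) (by linarith),
        div_le_div_iff₀ (by linarith) (by linarith)]
      have br : x + t - x ^ 2 - t ^ 2 - x ^ 2 * t - x * t ^ 2 ≤ 0 := by
        nlinarith [mul_nonneg (sub_nonneg.2 hx) (sub_nonneg.2 ht8.le), mul_nonneg (mul_nonneg (sub_nonneg.2 hx) (sub_nonneg.2 hx)) ht0.le, mul_nonneg (mul_nonneg (sub_nonneg.2 ht8.le) (sub_nonneg.2 ht8.le)) (show 0 ≤ x by linarith)]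
      nlinarith [mul_nonneg (sub_nonneg.2 hxt) (neg_nonneg.2 br)]
    have mt := drM_nonneg ht0.le
    have mx := drM_nonneg (s := x) (by linarith)
    have a2 : (l - t) * (1 - x) ≤ (l - x) * (1 - t) := by nlinarith
    have a3 : (drM t * (l - t)) * (1 - t) ≤ (drM x * (l - x)) * (1 - t) := by
      have b1 := mul_le_mul_of_nonneg_right a1 (show 0 ≤ l - t by linarith)
      have b2 := mul_le_mul_of_nonneg_left a2 mx
      nlinarith
    exact le_of_mul_le_mul_right a3 (by linarith)
  have hB : ∀ x, 0.405 ≤ x → x ≤ t → 0 < drD l t x := by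
    intro x hx hxt
    refine hself.trans_le (dr_anti0 (by linarith) hxt (by linarith) ?_)
    intro y hy hy1
    unfold drD'
    exact mul_nonpos_of_nonneg_of_nonpos (drM_nonneg (by linarith))
      (by linarith [hbig y (by linarith) hy1.le])
  rcases le_total 0.405 s with h | h
  · exact hB s h hst.le
  · rcases le_total (drM s * (l - s)) (drM t * (l - t)) with h2 | h2
    · refine (dr_zero hlt hl ht0 ht).trans_le (dr_mono0 le_rfl hs (by linarith) ?_)
      intro y hy hy1
      unfold drD'
      exact mul_nonneg (drM_nonneg (by linarith)) (by linarith [hinc y s hy.le hy1.le h])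
    · refine (hB 0.405 le_rfl (by linarith)).trans_le (dr_anti0 hs h (by norm_num) ?_)
      intro y hy hy1
      unfold drD'
      exact mul_nonpos_of_nonneg_of_nonpos (drM_nonneg (by linarith))
        (by linarith [hinc s y hs hy.le hy1.le])

lemma dr_main {l t s : ℝ} (hl : 0 ≤ l) (hl1 : l < 1) (ht : 0 ≤ t) (ht1 : t < 1)
    (hs : 0 ≤ s) (hs1 : s < 1) : 0 ≤ drD l t s ∧ (drD l t s = 0 → t = l ∧ s = l) := by
  rcases lt_trichotomy t l with h | h | h
  · have : 0 < drD l t s := by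
      rcases le_or_gt t s with h2 | h2
      · exact dr_case2 ht h hl1 h2 hs1
      · rcases lt_or_ge (t ^ 2) (2 / 3) with h3 | h3
        · exact dr_case3 h hl1 hs h2 h3
        · exact dr_case4 h hl1 hs h2 h3
    exact ⟨this.le, fun h => by linarith⟩
  · subst h
    by_cases hne : s = t
    · subst hne
      rw [drD_self ht ht1]; simp
    · have := dr_strict hl hl1 hs hs1 hne
      exact ⟨this.le, fun h => by linarith⟩
  · have h2 := dr_case1 hl h.le ht1 hs hs1
    have : 0 < (l - t) ^ 2 / 2 := by
      have : 0 < t - l := by linarith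
      have : 0 < (t - l) ^ 2 := by positivity
      nlinarith
    exact ⟨by linarith, fun h => by linarith⟩

lemma DR_zero (d : ℕ) (l : ℝ) (x : Euc d) : DR d l x 0 = x 0 / ‖x‖ := by
  simp [DR, e, Finset.sum_apply, Pi.single_apply]

lemma DR_one (d : ℕ) (l : ℝ) (x : Euc d) : DR d l x 1 = (1 - 1 / ‖x‖) * x 1 + l := by
  simp [DR, e, Finset.sum_apply, Pi.single_apply]

lemma DR_ss (d : ℕ) (l : ℝ) (x : Euc d) (i : Fin d) :
    DR d l x i.succ.succ = (1 - 1 / ‖x‖) * x i.succ.succ := by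
  have h0 : (i.succ.succ : Fin (d + 2)) ≠ 1 := by
    intro h; have := congrArg Fin.val h; simp at this
  simp [DR, e, Finset.sum_apply, Pi.single_apply, h0]

lemma euc_norm_sq (d : ℕ) (x : Euc d) :
    ‖x‖ ^ 2 = x 0 ^ 2 + x 1 ^ 2 + ∑ i : Fin d, x i.succ.succ ^ 2 := by
  rw [EuclideanSpace.real_norm_sq_eq, Fin.sum_univ_succ, Fin.sum_univ_succ]
  simp; ring

lemma euc_norm_sq' (d : ℕ) (l : ℝ) (x : Euc d) :
    ‖x - l • e d 1‖ ^ 2 = x 0 ^ 2 + (x 1 - l) ^ 2 + ∑ i : Fin d, x i.succ.succ ^ 2 := by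
  have h0 : ∀ i : Fin d, (i.succ.succ : Fin (d + 2)) ≠ 1 := by
    intro i h; have := congrArg Fin.val h; simp at this
  rw [euc_norm_sq]
  simp [e, h0]

lemma dr_conv {l a : ℝ} (h0 : 0 < a) (h1 : a ≤ 1) :
    - l * Real.log (1 + Real.sqrt (1 - a ^ 2)) + l * Real.sqrt (1 - a ^ 2) + (l - 1) * Real.log a
      = drG l (Real.sqrt (1 - a ^ 2)) := by
  have : 1 - Real.sqrt (1 - a ^ 2) ^ 2 = a ^ 2 := by
    rw [Real.sq_sqrt (by nlinarith)]; ring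
  rw [drG, this, Real.log_pow]; push_cast; ring

set_option maxHeartbeats 1000000 in
/-- For `λ ∈ [0,1)` and `x ∈ Δ`, `F(T x) = F(x)` iff `x = x*`. -/
theorem stmt6 (d : ℕ) (lam : ℝ) (h0 : 0 ≤ lam) (h1 : lam < 1) :
    ∀ x ∈ Delta d, (F d lam (DR d lam x) = F d lam x ↔ x = xStar d lam) := by
  intro x hx
  obtain ⟨ha, ha1⟩ := hx
  have h01 : ∀ i : Fin d, (i.succ.succ : Fin (d + 2)) ≠ 1 := by
    intro i h; have := congrArg Fin.val h; simp at this
  have hn := euc_norm_sq d x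
  have hS : 0 ≤ ∑ i : Fin d, x i.succ.succ ^ 2 := Finset.sum_nonneg fun i _ => sq_nonneg _
  have hxs : x = xStar d lam ↔ (x 0 = Real.sqrt (1 - lam ^ 2) ∧ x 1 = lam ∧
      ∑ i : Fin d, x i.succ.succ ^ 2 = 0) := by
    constructor
    · rintro rfl
      simp [xStar, e, h01]
    · rintro ⟨p, q, r⟩
      rw [Finset.sum_eq_zero_iff_of_nonneg (fun i _ => sq_nonneg _)] at r
      ext i
      refine Fin.cases ?_ (fun i => Fin.cases ?_ (fun i => ?_) i) i
      · simp [xStar, e, p]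
      · simp [xStar, e, q]
      · simpa [xStar, e, h01] using r i (Finset.mem_univ _)
  rw [hxs]
  have hr : 0 < ‖x‖ := by
    rw [norm_pos_iff]; rintro rfl; simp at ha
  have hFx : F d lam x = (1 / 2) * (x 0 ^ 2 + (x 1 - lam) ^ 2 + ∑ i : Fin d, x i.succ.succ ^ 2)
      + drG lam (Real.sqrt (1 - x 0 ^ 2)) := by
    rw [F, euc_norm_sq', ← dr_conv ha ha1]; ring
  have hFT : F d lam (DR d lam x) = (1 / 2) * ((x 0 / ‖x‖) ^ 2 + ((1 - 1 / ‖x‖) * x 1) ^ 2 +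
      (1 - 1 / ‖x‖) ^ 2 * ∑ i : Fin d, x i.succ.succ ^ 2)
      + drG lam (Real.sqrt (1 - (x 0 / ‖x‖) ^ 2)) := by
    rw [F, euc_norm_sq', DR_zero, DR_one, ← dr_conv (by positivity)
      (by rw [div_le_one hr]; nlinarith [sq_nonneg (x 1)])]
    simp only [DR_ss, mul_pow, ← Finset.mul_sum]
    ring
  rw [hFx, hFT]
  clear hFx hFT hxs
  generalize (∑ i : Fin d, x i.succ.succ ^ 2) = S at *
  generalize ‖x‖ = r at *
  generalize x 0 = a at *
  generalize x 1 = b at *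
  have hu0 : 0 < a / r := by positivity
  have hu1 : a / r ≤ 1 := by rw [div_le_one hr]; nlinarith [sq_nonneg b]
  obtain ⟨u, hu⟩ : ∃ u, u = a / r := ⟨_, rfl⟩
  rw [← hu] at hu0 hu1 ⊢
  have hau : a = r * u := by rw [hu]; field_simp
  have hs2 := Real.sq_sqrt (show 0 ≤ 1 - a ^ 2 by nlinarith)
  have ht2 := Real.sq_sqrt (show 0 ≤ 1 - u ^ 2 by nlinarith)
  have hs0 := Real.sqrt_nonneg (1 - a ^ 2)
  have ht0 := Real.sqrt_nonneg (1 - u ^ 2)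
  have hsa : Real.sqrt (1 - a ^ 2) = Real.sqrt (1 - lam ^ 2) → True := fun _ => trivial
  generalize Real.sqrt (1 - a ^ 2) = s at *
  generalize Real.sqrt (1 - u ^ 2) = t at *
  have hs1 : s < 1 := by nlinarith
  have ht1 : t < 1 := by nlinarith
  obtain ⟨hD0, hD⟩ := dr_main h0 h1 ht0 ht1 hs0 hs1
  have hb : b ≤ r * t := by
    apply abs_le_of_sq_le_sq' _ (by positivity) |>.2
    rw [mul_pow, ht2]
    have : r ^ 2 * u ^ 2 = a ^ 2 := by rw [hau]; ring
    nlinarith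
  have hsq1 : Real.sqrt (1 - s ^ 2) = a := by
    rw [hs2, show 1 - (1 - a ^ 2) = a ^ 2 by ring, Real.sqrt_sq ha.le]
  have hsq2 : Real.sqrt (1 - t ^ 2) = u := by
    rw [ht2, show 1 - (1 - u ^ 2) = u ^ 2 by ring, Real.sqrt_sq hu0.le]
  have hSe : S = r ^ 2 - a ^ 2 - b ^ 2 := by linarith
  have key : 1 / 2 * (a ^ 2 + (b - lam) ^ 2 + S) + drG lam s
      - (1 / 2 * (u ^ 2 + ((1 - 1 / r) * b) ^ 2 + (1 - 1 / r) ^ 2 * S) + drG lam t)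
      = drD lam t s + lam * (r * t - b) := by
    rw [drD, hsq1, drM, hsq2, hSe]
    have e1 : a * (t / u * (t - lam)) = r * t * (t - lam) := by
      rw [hau]; field_simp
    have e2 : ((1 - 1 / r) * b) ^ 2 + (1 - 1 / r) ^ 2 * (r ^ 2 - a ^ 2 - b ^ 2)
        = (r - 1) ^ 2 * (1 - u ^ 2) := by
      rw [hau]; field_simp; ring
    rw [e1, add_assoc (u ^ 2), e2, hs2, ← ht2, show u ^ 2 = 1 - t ^ 2 by linarith, hau]
    ring_nf
    have : u ^ 2 = 1 - t ^ 2 := by linarith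
    rw [this]; ring
  have hlb : 0 ≤ lam * (r * t - b) := mul_nonneg h0 (by linarith)
  constructor
  · intro h
    rw [h, sub_self] at key
    obtain ⟨e1, e2⟩ := hD (by linarith)
    have e3 : lam * (r * t - b) = 0 := by linarith
    have ha' : a = Real.sqrt (1 - lam ^ 2) := by rw [← e2]; exact hsq1.symm
    have hu' : u = Real.sqrt (1 - lam ^ 2) := by rw [← e1]; exact hsq2.symm
    have hr1 : r = 1 := by
      have : r * u = 1 * u := by linarith
      exact mul_right_cancel₀ hu0.ne' this
    have hbS : b ^ 2 + S = lam ^ 2 := by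
      rw [hSe, hr1]; rw [e2] at hs2; linarith
    refine ⟨ha', ?_⟩
    rcases mul_eq_zero.1 e3 with h | h
    · have h2 : b ^ 2 = 0 := by rw [h] at hbS; nlinarith [sq_nonneg b]
      have : b = 0 := by simpa using h2
      exact ⟨by rw [this, h], by rw [h] at hbS; linarith⟩
    · have : b = lam := by rw [hr1, e1] at h; linarith
      exact ⟨this, by rw [this] at hbS; linarith⟩
  · rintro ⟨p, q, w⟩
    have hl2 : a ^ 2 = 1 - lam ^ 2 := by rw [p, Real.sq_sqrt (by nlinarith)]
    have hr1 : r = 1 := by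
      have : r ^ 2 = 1 := by rw [hn, hl2, q, w]; ring
      exact (pow_eq_one_iff_of_nonneg hr.le (by norm_num)).1 this
    have e1 : s = lam := by
      have : s ^ 2 = lam ^ 2 := by rw [hs2]; linarith
      exact (pow_left_inj₀ hs0 h0 (by norm_num)).1 this
    have hua : u = a := by rw [hau, hr1]; ring
    have e2 : t = lam := by
      have : t ^ 2 = lam ^ 2 := by rw [ht2, hua]; linarith
      exact (pow_left_inj₀ ht0 h0 (by norm_num)).1 this
    have : drD lam t s = 0 := by
      rw [e1, e2, drD_self h0 h1]; simp
    rw [this, hr1, e2, q] at key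
    rw [hr1, q, w, e1, e2, hua]; ring
end
end

section
/- Let d ≥ 2 and λ ∈ [0,1). With W(x) = F(x) − F(T x) for x ∈ Δ, define g : [0,∞) → ℝ by g(t) = inf { W(x) : x ∈ Δ, ‖x − x*‖ ≥ t }. Then g is non-decreasing, non-negative, continuous, and positive definite: g(t) = 0 if and only if t = 0. -/
noncomputable section

open Metric Set Filter

/-- `W(x) = F(x) − F(T x)`. -/
def W (d : ℕ) (lam : ℝ) (x : Euc d) : ℝ := F d lam x - F d lam (DR d lam x)

/-- `g(t) = inf { W(x) : x ∈ Δ, ‖x − x*‖ ≥ t }`. -/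
def g (d : ℕ) (lam : ℝ) (t : ℝ) : ℝ :=
  sInf {w : ℝ | ∃ x : Euc d, x ∈ Delta d ∧ t ≤ ‖x - xStar d lam‖ ∧ w = W d lam x}


def PhiS (l s : ℝ) : ℝ :=
  (1 - s ^ 2) / 2 + l * s - (1 + l) / 2 * Real.log (1 + s) - (1 - l) / 2 * Real.log (1 - s)

def Wsc (l s c : ℝ) : ℝ :=
  PhiS l s - PhiS l c + Real.sqrt (1 - s ^ 2) / Real.sqrt (1 - c ^ 2) * (c * (c - l))
    + (l ^ 2 - c ^ 2) / 2

lemma sq_pos_aux {s : ℝ} (h0 : 0 ≤ s) (h1 : s < 1) : 0 < 1 - s ^ 2 := by nlinarith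

lemma sqrt_pos_aux {s : ℝ} (h0 : 0 ≤ s) (h1 : s < 1) : 0 < Real.sqrt (1 - s ^ 2) :=
  Real.sqrt_pos.2 (sq_pos_aux h0 h1)

lemma hasDeriv_sq (s : ℝ) : HasDerivAt (fun s : ℝ => s ^ 2) (2 * s) s := by
  simpa using hasDerivAt_pow 2 s

lemma hasDeriv_sqrt {s : ℝ} (h0 : 0 ≤ s) (h1 : s < 1) :
    HasDerivAt (fun s : ℝ => Real.sqrt (1 - s ^ 2)) (-s / Real.sqrt (1 - s ^ 2)) s := by
  have h := sq_pos_aux h0 h1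
  have hp := sqrt_pos_aux h0 h1
  have := ((hasDeriv_sq s).const_sub 1).sqrt h.ne'
  refine this.congr_deriv ?_
  field_simp

lemma hasDeriv_PhiS (l : ℝ) {s : ℝ} (h0 : 0 ≤ s) (h1 : s < 1) :
    HasDerivAt (PhiS l) ((s - l) * s ^ 2 / (1 - s ^ 2)) s := by
  have h := sq_pos_aux h0 h1
  have hp : (1 + s) ≠ 0 := by positivity
  have hm : (1 - s) ≠ 0 := by linarith
  have d1 : HasDerivAt (fun s : ℝ => (1 - s ^ 2) / 2) (-s) s := by
    exact (((hasDeriv_sq s).const_sub 1).div_const 2).congr_deriv (by ring)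
  have d2 : HasDerivAt (fun s : ℝ => l * s) l s := by
    simpa using (hasDerivAt_id s).const_mul l
  have d3 : HasDerivAt (fun s : ℝ => (1 + l) / 2 * Real.log (1 + s)) ((1 + l) / 2 * (1 / (1 + s))) s :=
    (((hasDerivAt_id s).const_add 1).log hp).const_mul _
  have d4 : HasDerivAt (fun s : ℝ => (1 - l) / 2 * Real.log (1 - s)) ((1 - l) / 2 * (-1 / (1 - s))) s :=
    (((hasDerivAt_id s).const_sub 1).log hm).const_mul _
  have := ((d1.add d2).sub d3).sub d4
  refine HasDerivAt.congr_deriv this ?_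
  have : (1 - s ^ 2) = (1 + s) * (1 - s) := by ring
  rw [this]
  field_simp
  ring

lemma hasDeriv_s (l c : ℝ) {s : ℝ} (h0 : 0 ≤ s) (h1 : s < 1) :
    HasDerivAt (fun s => Wsc l s c)
      (s / Real.sqrt (1 - s ^ 2) *
        (s * (s - l) / Real.sqrt (1 - s ^ 2) - c * (c - l) / Real.sqrt (1 - c ^ 2))) s := by
  have h := sq_pos_aux h0 h1
  have hp := sqrt_pos_aux h0 h1
  have hs := Real.sq_sqrt h.le
  have := ((((hasDeriv_PhiS l h0 h1).sub_const (PhiS l c))).add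
    (((hasDeriv_sqrt h0 h1).div_const (Real.sqrt (1 - c ^ 2))).mul_const (c * (c - l)))).add_const
      ((l ^ 2 - c ^ 2) / 2)
  refine HasDerivAt.congr_deriv this ?_
  have e1 : (s - l) * s ^ 2 / (1 - s ^ 2) =
      (s - l) * s ^ 2 / (Real.sqrt (1 - s ^ 2)) ^ 2 := by rw [hs]
  rw [e1]
  ring

lemma hasDeriv_c (l s : ℝ) {c : ℝ} (h0 : 0 ≤ c) (h1 : c < 1) :
    HasDerivAt (fun c => Wsc l s c)
      ((Real.sqrt (1 - s ^ 2) * (2 * c - l - c ^ 3) - Real.sqrt (1 - c ^ 2) * (c * (1 - l * c)))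
        / (Real.sqrt (1 - c ^ 2)) ^ 3) c := by
  have h := sq_pos_aux h0 h1
  have hp := sqrt_pos_aux h0 h1
  have hs := Real.sq_sqrt h.le
  have d5 : HasDerivAt (fun c : ℝ => c * (c - l)) (1 * (c - l) + c * 1) c :=
    (hasDerivAt_id c).mul ((hasDerivAt_id c).sub_const l)
  have d6 : HasDerivAt (fun c : ℝ => (l ^ 2 - c ^ 2) / 2) (-c) c := by
    exact (((hasDeriv_sq c).const_sub (l ^ 2)).div_const 2).congr_deriv (by ring)
  have := ((((hasDeriv_PhiS l h0 h1).const_sub (PhiS l s))).add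
    ((((hasDerivAt_const c (Real.sqrt (1 - s ^ 2))).div (hasDeriv_sqrt h0 h1) hp.ne')).mul d5)).add
      d6
  refine HasDerivAt.congr_deriv this ?_
  have e1 : (c - l) * c ^ 2 / (1 - c ^ 2) =
      (c - l) * c ^ 2 / (Real.sqrt (1 - c ^ 2)) ^ 2 := by rw [hs]
  rw [e1]
  simp only [Pi.div_apply]
  set b := Real.sqrt (1 - c ^ 2)
  set a := Real.sqrt (1 - s ^ 2)
  have hb : c ^ 2 = 1 - b ^ 2 := by linarith
  have hb4 : c ^ 3 = c * (1 - b ^ 2) := by rw [← hb]; ring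
  field_simp
  linear_combination (2 * a * c - a * l - b * c) * hb

lemma Wsc_self (l : ℝ) {c : ℝ} (h0 : 0 ≤ c) (h1 : c < 1) : Wsc l c c = (c - l) ^ 2 / 2 := by
  have hp := sqrt_pos_aux h0 h1
  unfold Wsc
  rw [div_self hp.ne']
  ring

lemma sqrt_lt_aux {u c : ℝ} (h0 : 0 ≤ u) (h : u < c) (h1 : c < 1) :
    Real.sqrt (1 - c ^ 2) < Real.sqrt (1 - u ^ 2) :=
  Real.sqrt_lt_sqrt (sq_pos_aux (by linarith) h1).le (by nlinarith)

/-- case `c ≥ l`. -/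
lemma caseA {l s c : ℝ} (hl : 0 ≤ l) (hlc : l ≤ c) (hc : c < 1) (hs0 : 0 ≤ s) (hs1 : s < 1)
    (hne : s ≠ c) : (c - l) ^ 2 / 2 < Wsc l s c := by
  have hc0 : 0 ≤ c := hl.trans hlc
  rw [← Wsc_self l hc0 hc]
  have hb := sqrt_pos_aux hc0 hc
  rcases lt_or_gt_of_ne hne with h | h
  · have : StrictAntiOn (fun s => Wsc l s c) (Icc s c) := by
      apply strictAntiOn_of_deriv_neg (convex_Icc _ _)
      · intro u hu
        exact (hasDeriv_s l c (hs0.trans hu.1) (hu.2.trans_lt hc)).continuousAt.continuousWithinAt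
      · intro u hu
        rw [interior_Icc] at hu
        have hu0 : 0 < u := hs0.trans_lt hu.1
        rw [(hasDeriv_s l c hu0.le (hu.2.trans hc)).deriv]
        have ha := sqrt_pos_aux hu0.le (hu.2.trans hc)
        have hab := sqrt_lt_aux hu0.le hu.2 hc
        apply mul_neg_of_pos_of_neg (div_pos hu0 ha)
        rw [sub_neg]
        rcases lt_or_ge u l with h' | h'
        · calc _ < 0 := div_neg_of_neg_of_pos (mul_neg_of_pos_of_neg hu0 (by linarith)) ha
            _ ≤ _ := div_nonneg (mul_nonneg hc0 (by linarith)) hb.le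
        · have h3 : u * (u - l) < c * (c - l) := by nlinarith [hu.2]
          have h4 : 0 ≤ u * (u - l) := mul_nonneg hu0.le (by linarith)
          exact div_lt_div₀ h3 hab.le (h4.trans h3.le) hb
    exact this (left_mem_Icc.2 h.le) (right_mem_Icc.2 h.le) h
  · have : StrictMonoOn (fun s => Wsc l s c) (Icc c s) := by
      apply strictMonoOn_of_deriv_pos (convex_Icc _ _)
      · intro u hu
        exact (hasDeriv_s l c (hc0.trans hu.1) (hu.2.trans_lt hs1)).continuousAt.continuousWithinAt
      · intro u hu
        rw [interior_Icc] at hu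
        have hu0 : 0 < u := hc0.trans_lt hu.1
        have hu1 := hu.2.trans hs1
        rw [(hasDeriv_s l c hu0.le hu1).deriv]
        have ha := sqrt_pos_aux hu0.le hu1
        have hab := sqrt_lt_aux hc0 hu.1 hu1
        apply mul_pos (div_pos hu0 ha)
        rw [sub_pos]
        have h3 : c * (c - l) < u * (u - l) := by nlinarith [hu.1]
        have h4 : 0 ≤ c * (c - l) := mul_nonneg hc0 (by linarith)
        exact div_lt_div₀ h3 hab.le (h4.trans h3.le) ha
    exact this (left_mem_Icc.2 h.le) (right_mem_Icc.2 h.le) h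

lemma caseA' {l s c : ℝ} (hl : 0 ≤ l) (hlc : l ≤ c) (hc : c < 1) (hs0 : 0 ≤ s) (hs1 : s < 1) :
    (c - l) ^ 2 / 2 ≤ Wsc l s c := by
  by_cases h : s = c
  · subst h; rw [Wsc_self l hs0 hs1]
  · exact (caseA hl hlc hc hs0 hs1 h).le

lemma caseB {l s c : ℝ} (hl1 : l < 1) (hc0 : 0 ≤ c) (hcl : c < l) (hcs : c < s)
    (hs1 : s < 1) : 0 < Wsc l s c := by
  have hl : 0 < l := hc0.trans_lt hcl
  set k := min s l with hk
  have hck : c < k := lt_min hcs hcl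
  have hk1 : k < 1 := (min_le_right _ _).trans_lt hl1
  have hanti : StrictAntiOn (fun c => Wsc l s c) (Icc c k) := by
    apply strictAntiOn_of_deriv_neg (convex_Icc _ _)
    · intro u hu
      exact (hasDeriv_c l s (hc0.trans hu.1) (hu.2.trans_lt hk1)).continuousAt.continuousWithinAt
    · intro u hu
      rw [interior_Icc] at hu
      have hu0 : 0 < u := hc0.trans_lt hu.1
      have hu1 := hu.2.trans hk1
      have hus : u < s := hu.2.trans_le (min_le_left _ _)
      have hul : u < l := hu.2.trans_le (min_le_right _ _)
      rw [(hasDeriv_c l s hu0.le hu1).deriv]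
      have hb := sqrt_pos_aux hu0.le hu1
      have ha := sqrt_pos_aux (hu0.le.trans hus.le) hs1
      have hab := sqrt_lt_aux hu0.le hus hs1
      apply div_neg_of_neg_of_pos _ (by positivity)
      set b := Real.sqrt (1 - u ^ 2)
      set a := Real.sqrt (1 - s ^ 2)
      have h5 : 0 < u * (1 - l * u) := mul_pos hu0 (by nlinarith)
      rcases le_or_gt (2 * u - l - u ^ 3) 0 with h' | h'
      · nlinarith [mul_pos hb h5, mul_nonneg ha.le (neg_nonneg.2 h')]
      · have h6 : a * (2 * u - l - u ^ 3) ≤ b * (2 * u - l - u ^ 3) := by gcongr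
        have h7 : b * (2 * u - l - u ^ 3) - b * (u * (1 - l * u)) = - (b * ((l - u) * (1 - u ^ 2))) := by
          ring
        have h8 : 0 < b * ((l - u) * (1 - u ^ 2)) :=
          mul_pos hb (mul_pos (by linarith) (sq_pos_aux hu0.le hu1))
        linarith
  have h := hanti (left_mem_Icc.2 hck.le) (right_mem_Icc.2 hck.le) hck
  refine lt_of_le_of_lt ?_ h
  show 0 ≤ Wsc l s k
  rcases le_total s l with h' | h'
  · rw [hk, min_eq_left h', Wsc_self l (hc0.trans hcs.le) hs1]; positivity
  · rw [hk, min_eq_right h']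
    have := caseA' hl.le le_rfl hl1 (hc0.trans hcs.le) hs1
    simpa using this

lemma hasDeriv_q (l : ℝ) {s : ℝ} (h0 : 0 ≤ s) (h1 : s < 1) :
    HasDerivAt (fun s => s * (l - s) / Real.sqrt (1 - s ^ 2))
      ((l - 2 * s + s ^ 3) / (Real.sqrt (1 - s ^ 2)) ^ 3) s := by
  have h := sq_pos_aux h0 h1
  have hp := sqrt_pos_aux h0 h1
  have hs := Real.sq_sqrt h.le
  have d5 : HasDerivAt (fun c : ℝ => c * (l - c)) (1 * (l - s) + s * (-1)) s :=
    (hasDerivAt_id s).mul ((hasDerivAt_id s).const_sub l)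
  refine HasDerivAt.congr_deriv (d5.div (hasDeriv_sqrt h0 h1) hp.ne') ?_
  set b := Real.sqrt (1 - s ^ 2)
  field_simp
  rw [hs]; ring

lemma P_aux {l u v : ℝ} (hl : l < 1) (huv : u ≤ v) (hu : 0 ≤ u) (hv : v < 1)
    (h : 0 ≤ l - 2 * v + v ^ 3) : 0 ≤ l - 2 * u + u ^ 3 := by
  have h1 : 0 ≤ (1 - v) * (v - u) * (1 - u) * (1 + u + v) := by
    have := sub_nonneg.2 huv
    have : 0 ≤ 1 - v := by linarith
    have : 0 ≤ 1 - u := by linarith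
    have : 0 ≤ v := by linarith
    positivity
  by_contra hc
  push Not at hc
  have h2 : (1 - v) * (l - 2 * u + u ^ 3) < 0 := mul_neg_of_pos_of_neg (by linarith) hc
  have h3 : 0 ≤ (1 - u) * (l - 2 * v + v ^ 3) := mul_nonneg (by linarith) h
  have h4 : 0 ≤ (v - u) * (1 - l) := mul_nonneg (by linarith) (by linarith)
  nlinarith

lemma q_quasi {l u v w : ℝ} (hl : l < 1) (hu : 0 ≤ u) (huv : u ≤ v) (hvw : v ≤ w) (hw : w < 1) :
    u * (l - u) / Real.sqrt (1 - u ^ 2) ≤ v * (l - v) / Real.sqrt (1 - v ^ 2) ∨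
    w * (l - w) / Real.sqrt (1 - w ^ 2) ≤ v * (l - v) / Real.sqrt (1 - v ^ 2) := by
  rcases le_total 0 (l - 2 * v + v ^ 3) with h | h
  · left
    have : MonotoneOn (fun s => s * (l - s) / Real.sqrt (1 - s ^ 2)) (Icc u v) := by
      apply monotoneOn_of_deriv_nonneg (convex_Icc _ _)
      · intro x hx
        exact (hasDeriv_q l (hu.trans hx.1) ((hx.2.trans hvw).trans_lt hw)).continuousAt.continuousWithinAt
      · intro x hx
        have hx := interior_subset hx
        exact (hasDeriv_q l (hu.trans hx.1) ((hx.2.trans hvw).trans_lt hw)).differentiableAt.differentiableWithinAt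
      · intro x hx
        have hx := interior_subset hx
        rw [(hasDeriv_q l (hu.trans hx.1) ((hx.2.trans hvw).trans_lt hw)).deriv]
        exact div_nonneg (P_aux hl hx.2 (hu.trans hx.1) (hvw.trans_lt hw) h) (by positivity)
    exact this (left_mem_Icc.2 huv) (right_mem_Icc.2 huv) huv
  · right
    have hv0 := hu.trans huv
    have : AntitoneOn (fun s => s * (l - s) / Real.sqrt (1 - s ^ 2)) (Icc v w) := by
      apply antitoneOn_of_deriv_nonpos (convex_Icc _ _)
      · intro x hx
        exact (hasDeriv_q l (hv0.trans hx.1) (hx.2.trans_lt hw)).continuousAt.continuousWithinAt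
      · intro x hx
        have hx := interior_subset hx
        exact (hasDeriv_q l (hv0.trans hx.1) (hx.2.trans_lt hw)).differentiableAt.differentiableWithinAt
      · intro x hx
        rw [interior_Icc] at hx
        rw [(hasDeriv_q l (hv0.trans hx.1.le) (hx.2.trans hw)).deriv]
        refine div_nonpos_of_nonpos_of_nonneg ?_ (by positivity)
        by_contra hc
        push Not at hc
        have h1 : 0 ≤ (1 - x) * (x - v) * (1 - v) * (1 + v + x) := by
          have := sub_nonneg.2 hx.1.le
          have : 0 ≤ 1 - x := by linarith [hx.2]
          have : 0 ≤ 1 - v := by linarith [hx.1]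
          have : 0 ≤ x := by linarith
          positivity
        have h2 : (1 - x) * (l - 2 * v + v ^ 3) ≤ 0 :=
          mul_nonpos_of_nonneg_of_nonpos (by linarith [hx.2]) h
        have h3 : 0 < (1 - v) * (l - 2 * x + x ^ 3) := mul_pos (by linarith [hx.1, hx.2]) hc
        have h4 : 0 ≤ (x - v) * (1 - l) := mul_nonneg (by linarith [hx.1]) (by linarith)
        nlinarith
    exact this (left_mem_Icc.2 hvw) (right_mem_Icc.2 hvw) hvw

lemma log_one_sub_deriv {c : ℝ} (h1 : c < 1) :
    HasDerivAt (fun c : ℝ => Real.log (1 - c)) (-1 / (1 - c)) c :=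
  ((hasDerivAt_id c).const_sub 1).log (by simp; linarith)

lemma log_one_add_deriv {c : ℝ} (h0 : 0 ≤ c) :
    HasDerivAt (fun c : ℝ => Real.log (1 + c)) (1 / (1 + c)) c :=
  ((hasDerivAt_id c).const_add 1).log (by simp; linarith)

lemma nonneg_of_deriv {f f' : ℝ → ℝ} (h00 : 0 ≤ f 0)
    (hd : ∀ u, 0 ≤ u → u < 1 → HasDerivAt f (f' u) u)
    (hn : ∀ u, 0 ≤ u → u < 1 → 0 ≤ f' u) {c : ℝ} (h0 : 0 ≤ c) (h1 : c < 1) : 0 ≤ f c := by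
  have : MonotoneOn f (Icc 0 c) := by
    apply monotoneOn_of_deriv_nonneg (convex_Icc _ _)
    · intro x hx
      exact (hd x hx.1 (hx.2.trans_lt h1)).continuousAt.continuousWithinAt
    · intro x hx
      have hx := interior_subset hx
      exact (hd x hx.1 (hx.2.trans_lt h1)).differentiableAt.differentiableWithinAt
    · intro x hx
      have hx := interior_subset hx
      rw [(hd x hx.1 (hx.2.trans_lt h1)).deriv]
      exact hn x hx.1 (hx.2.trans_lt h1)
  exact h00.trans (this (left_mem_Icc.2 h0) (right_mem_Icc.2 h0) h0)

def At (c : ℝ) : ℝ := (Real.log (1 + c) - Real.log (1 - c)) / 2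

lemma At_deriv {c : ℝ} (h0 : 0 ≤ c) (h1 : c < 1) : HasDerivAt At (1 / (1 - c ^ 2)) c := by
  have hp : (1 + c) ≠ 0 := by positivity
  have hm : (1 - c) ≠ 0 := by linarith
  refine (((log_one_add_deriv h0).sub (log_one_sub_deriv h1)).div_const 2).congr_deriv ?_
  have : (1 - c ^ 2) = (1 + c) * (1 - c) := by ring
  rw [this]
  field_simp
  ring

lemma poly_deriv (p q r c : ℝ) : HasDerivAt (fun c : ℝ => c * p + c ^ 3 * q + c ^ 5 * r)
    (p + 3 * c ^ 2 * q + 5 * c ^ 4 * r) c := by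
  refine (((hasDerivAt_id c).mul_const p).add ((hasDerivAt_pow 3 c).mul_const q)).add
    ((hasDerivAt_pow 5 c).mul_const r) |>.congr_deriv ?_
  norm_num

lemma poly_deriv' (p q r c : ℝ) : HasDerivAt (fun c : ℝ => c ^ 2 * p + c ^ 4 * q + c ^ 6 * r)
    (2 * c * p + 4 * c ^ 3 * q + 6 * c ^ 5 * r) c := by
  refine (((hasDerivAt_pow 2 c).mul_const p).add ((hasDerivAt_pow 4 c).mul_const q)).add
    ((hasDerivAt_pow 6 c).mul_const r) |>.congr_deriv ?_
  norm_num

lemma At_lower {c : ℝ} (h0 : 0 ≤ c) (h1 : c < 1) : c + c ^ 3 / 3 + c ^ 5 / 5 ≤ At c := by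
  have := nonneg_of_deriv (f := fun c => At c - (c * 1 + c ^ 3 * (1 / 3) + c ^ 5 * (1 / 5)))
    (f' := fun c => 1 / (1 - c ^ 2) - (1 + 3 * c ^ 2 * (1 / 3) + 5 * c ^ 4 * (1 / 5)))
    (by simp [At]) (fun u h0 h1 => (At_deriv h0 h1).sub (poly_deriv _ _ _ u))
    (fun u h0 h1 => by
      have h := sq_pos_aux h0 h1
      rw [sub_nonneg, le_div_iff₀ h]
      have : 0 ≤ u ^ 6 := by positivity
      nlinarith) h0 h1
  linarith

def Bt (c : ℝ) : ℝ := c * At c - c ^ 2 / 2 + (Real.log (1 + c) + Real.log (1 - c)) / 2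

lemma Bt_deriv {c : ℝ} (h0 : 0 ≤ c) (h1 : c < 1) : HasDerivAt Bt (At c - c) c := by
  have hp : (1 + c) ≠ 0 := by positivity
  have hm : (1 - c) ≠ 0 := by linarith
  refine ((((hasDerivAt_id c).mul (At_deriv h0 h1)).sub ((hasDeriv_sq c).div_const 2)).add
    (((log_one_add_deriv h0).add (log_one_sub_deriv h1)).div_const 2)).congr_deriv ?_
  have : (1 - c ^ 2) = (1 + c) * (1 - c) := by ring
  rw [this]
  simp only [id]
  field_simp
  ring

lemma Bt_lower {c : ℝ} (h0 : 0 ≤ c) (h1 : c < 1) : c ^ 4 / 12 + c ^ 6 / 30 ≤ Bt c := by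
  have := nonneg_of_deriv (f := fun c => Bt c - (c ^ 2 * 0 + c ^ 4 * (1 / 12) + c ^ 6 * (1 / 30)))
    (f' := fun c => At c - c - (2 * c * 0 + 4 * c ^ 3 * (1 / 12) + 6 * c ^ 5 * (1 / 30)))
    (by simp [Bt]) (fun u h0 h1 => (Bt_deriv h0 h1).sub (poly_deriv' _ _ _ u))
    (fun u h0 h1 => by
      have := At_lower h0 h1
      linarith) h0 h1
  linarith

lemma E1_pos {c : ℝ} (h0 : 0 < c) (h1 : c < 1) :
    0 < 1 / 2 - c - c * (1 - c) / Real.sqrt (1 - c ^ 2) + Real.log (1 + c) := by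
  have hb := sqrt_pos_aux h0.le h1
  have hs := Real.sq_sqrt (sq_pos_aux h0.le h1).le
  have hlog := Real.le_log_one_add_of_nonneg h0.le
  set b := Real.sqrt (1 - c ^ 2)
  have hw : (1 - c) / b ≤ ((1 - c) / (1 + c) / (3 / 10) + 3 / 10) / 2 := by
    have e1 : (1 - c) / (1 + c) = ((1 - c) / b) ^ 2 := by
      rw [div_pow, hs]
      have : (1 - c ^ 2) = (1 + c) * (1 - c) := by ring
      rw [this]
      have : 1 - c ≠ 0 := by linarith
      field_simp
    rw [e1]
    nlinarith [sq_nonneg ((1 - c) / b - 3 / 10)]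
  have h2 : c * (1 - c) / b ≤ c * (((1 - c) / (1 + c) / (3 / 10) + 3 / 10) / 2) := by
    rw [mul_div_assoc]; gcongr
  have h3 : 0 < 1 / 2 - c - c * (((1 - c) / (1 + c) / (3 / 10) + 3 / 10) / 2) + 2 * c / (c + 2) := by
    have : 1 / 2 - c - c * (((1 - c) / (1 + c) / (3 / 10) + 3 / 10) / 2) + 2 * c / (c + 2) =
      ((1 / 2 - c) * (1 + c) * (c + 2) - c * (((1 - c) / (3 / 10) + 3 / 10 * (1 + c)) / 2) * (c + 2)
        + 2 * c * (1 + c)) / ((1 + c) * (c + 2)) := by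
      field_simp
    rw [this]
    apply div_pos _ (by positivity)
    nlinarith [mul_nonneg h0.le (sq_nonneg (c - 4 / 5)), sq_nonneg (c - 4 / 5), mul_pos h0 (sub_pos.2 h1)]
  linarith

lemma caseC0 {l c : ℝ} (hc0 : 0 < c) (hcl : c < l) (hl1 : l < 1) : 0 < Wsc l 0 c := by
  have hc1 := hcl.trans hl1
  have hb := sqrt_pos_aux hc0.le hc1
  have hs := Real.sq_sqrt (sq_pos_aux hc0.le hc1).le
  have hA := At_lower hc0.le hc1
  have hB := Bt_lower hc0.le hc1
  have hE := E1_pos hc0 hc1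
  have key : Wsc l 0 c = Bt c - (l - c) * (c / Real.sqrt (1 - c ^ 2) - At c) + (l - c) ^ 2 / 2 := by
    simp only [Wsc, PhiS, Bt, At]
    simp
    ring
  have key1 : 1 / 2 - c - c * (1 - c) / Real.sqrt (1 - c ^ 2) + Real.log (1 + c) =
      Bt c - (1 - c) * (c / Real.sqrt (1 - c ^ 2) - At c) + (1 - c) ^ 2 / 2 := by
    simp only [Bt, At]
    ring
  rw [key]
  rw [key1] at hE
  have hBpos : 0 < Bt c := lt_of_lt_of_le (by positivity) hB
  set b := Real.sqrt (1 - c ^ 2)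
  set J := c / b - At c with hJ
  rcases le_or_gt J 0 with hJ0 | hJ0
  · nlinarith [mul_nonneg (sub_nonneg.2 hcl.le) (neg_nonneg.2 hJ0)]
  rcases le_or_gt (1 - c) J with hJ1 | hJ1
  · nlinarith [mul_nonneg (sub_nonneg.2 hl1.le) (sub_nonneg.2 hJ1), sq_nonneg (1 - l)]
  suffices J ^ 2 < 2 * Bt c by nlinarith [sq_nonneg (l - c - J)]
  rcases le_or_gt c (3 / 4) with h | h
  · have hJ3 : J ≤ 3 / 5 * c ^ 3 := by
      have : 1 / b ≤ 1 + 14 / 15 * c ^ 2 := by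
        rw [div_le_iff₀ hb]
        have hx : c ^ 2 ≤ 9 / 16 := by nlinarith
        have hx0 : 0 ≤ c ^ 2 := by positivity
        refine (sq_le_sq₀ (by norm_num) (by positivity)).1 ?_
        rw [mul_pow, hs]
        generalize c ^ 2 = x at hx hx0 ⊢
        nlinarith [mul_nonneg hx0 (sub_nonneg.2 hx), mul_nonneg hx0 (mul_nonneg hx0 (sub_nonneg.2 hx))]
      have h2 : c / b ≤ c * (1 + 14 / 15 * c ^ 2) := by
        rw [div_eq_mul_one_div]; gcongr
      have : 0 ≤ c ^ 5 := by positivity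
      rw [hJ]
      linarith
    have : J ^ 2 ≤ (3 / 5 * c ^ 3) ^ 2 := by gcongr
    have h4 : 0 < c ^ 4 := by positivity
    have h5 : c ^ 2 ≤ 9 / 16 := by nlinarith
    nlinarith
  · have : J ^ 2 ≤ (1 - c) ^ 2 := by gcongr
    have h2 : (1 - c) ^ 2 < 1 / 16 := by nlinarith
    have h4 : (3 / 4) ^ 4 ≤ c ^ 4 := by gcongr
    have h6 : (3 / 4) ^ 6 ≤ c ^ 6 := by gcongr
    norm_num at h4 h6
    linarith

lemma caseC {l s c : ℝ} (hl1 : l < 1) (hs0 : 0 ≤ s) (hsc : s < c) (hcl : c < l) :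
    0 < Wsc l s c := by
  have hc0 : 0 < c := hs0.trans_lt hsc
  have hc1 := hcl.trans hl1
  have hder : ∀ u, 0 ≤ u → u < 1 → HasDerivAt (fun s => Wsc l s c)
      (u / Real.sqrt (1 - u ^ 2) *
        (c * (l - c) / Real.sqrt (1 - c ^ 2) - u * (l - u) / Real.sqrt (1 - u ^ 2))) u := by
    intro u h0 h1
    refine (hasDeriv_s l c h0 h1).congr_deriv ?_
    ring
  rcases le_or_gt (c * (l - c) / Real.sqrt (1 - c ^ 2)) (s * (l - s) / Real.sqrt (1 - s ^ 2)) with h | h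
  · have : AntitoneOn (fun s => Wsc l s c) (Icc s c) := by
      apply antitoneOn_of_deriv_nonpos (convex_Icc _ _)
      · intro x hx
        exact (hder x (hs0.trans hx.1) (hx.2.trans_lt hc1)).continuousAt.continuousWithinAt
      · intro x hx
        have hx := interior_subset hx
        exact (hder x (hs0.trans hx.1) (hx.2.trans_lt hc1)).differentiableAt.differentiableWithinAt
      · intro x hx
        have hx := interior_subset hx
        rw [(hder x (hs0.trans hx.1) (hx.2.trans_lt hc1)).deriv]
        apply mul_nonpos_of_nonneg_of_nonpos
        · exact div_nonneg (hs0.trans hx.1) (Real.sqrt_nonneg _)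
        · rw [sub_nonpos]
          rcases q_quasi hl1 hs0 hx.1 hx.2 hc1 with h' | h'
          · exact h.trans h'
          · exact h'
    have := this (left_mem_Icc.2 hsc.le) (right_mem_Icc.2 hsc.le) hsc.le
    refine lt_of_lt_of_le ?_ this
    show 0 < Wsc l c c
    rw [Wsc_self l hc0.le hc1]
    have : 0 < (l - c) ^ 2 := by have := sub_pos.2 hcl; positivity
    nlinarith
  · have : MonotoneOn (fun s => Wsc l s c) (Icc 0 s) := by
      apply monotoneOn_of_deriv_nonneg (convex_Icc _ _)
      · intro x hx
        exact (hder x hx.1 (hx.2.trans_lt (hsc.trans hc1))).continuousAt.continuousWithinAt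
      · intro x hx
        have hx := interior_subset hx
        exact (hder x hx.1 (hx.2.trans_lt (hsc.trans hc1))).differentiableAt.differentiableWithinAt
      · intro x hx
        have hx := interior_subset hx
        rw [(hder x hx.1 (hx.2.trans_lt (hsc.trans hc1))).deriv]
        apply mul_nonneg
        · exact div_nonneg hx.1 (Real.sqrt_nonneg _)
        · rw [sub_nonneg]
          rcases q_quasi hl1 hx.1 hx.2 hsc.le hc1 with h' | h'
          · exact h'.trans h.le
          · exact absurd h' (not_le.2 h)
    have := this (left_mem_Icc.2 hs0) (right_mem_Icc.2 hs0) hs0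
    exact (caseC0 hc0 hcl hl1).trans_le this

lemma Wsc_pos {l s c : ℝ} (hl : 0 ≤ l) (hl1 : l < 1) (hs0 : 0 ≤ s) (hs1 : s < 1) (hc0 : 0 ≤ c)
    (hc1 : c < 1) (h : ¬ (s = l ∧ c = l)) : 0 < Wsc l s c := by
  rcases lt_or_ge c l with hcl | hcl
  · rcases lt_trichotomy s c with hsc | hsc | hsc
    · exact caseC hl1 hs0 hsc hcl
    · subst hsc
      rw [Wsc_self l hs0 hs1]
      have : 0 < (l - s) ^ 2 := by have := sub_pos.2 hcl; positivity
      nlinarith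
    · exact caseB hl1 hc0 hcl hsc hs1
  · by_cases hsc : s = c
    · subst hsc
      rw [Wsc_self l hs0 hs1]
      have : s - l ≠ 0 := fun h' => h ⟨by linarith, by linarith⟩
      positivity
    · have := caseA hl hcl hc1 hs0 hs1 hsc
      nlinarith [sq_nonneg (c - l)]

lemma e_self (d : ℕ) (j : Fin (d + 2)) : e d j j = 1 := by simp [e]

lemma e_ne (d : ℕ) {i j : Fin (d + 2)} (h : j ≠ i) : e d i j = 0 := by simp [e, h]

lemma norm_exp (d : ℕ) (v : Euc d) (α β : ℝ) :
    ‖v + α • e d 0 + β • e d 1‖ ^ 2 = ‖v‖ ^ 2 + 2 * α * v 0 + 2 * β * v 1 + α ^ 2 + β ^ 2 := by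
  have h01 : inner ℝ (e d 0) (e d 1) = 0 := by
    rw [e, e, EuclideanSpace.inner_single_left]; simp
  have hn : ∀ j, ‖e d j‖ = 1 := by intro j; simp [e]
  have hi : ∀ j, inner ℝ v (e d j) = v j := by
    intro j; simp [e, EuclideanSpace.inner_single_right]
  rw [norm_add_sq_real, norm_add_sq_real, inner_add_left, inner_smul_right, inner_smul_right,
    inner_smul_left, inner_smul_right, hi, hi, h01, norm_smul, norm_smul, hn, hn]
  simp
  ring

lemma norm_sq_ge (d : ℕ) (x : Euc d) : x 0 ^ 2 + x 1 ^ 2 ≤ ‖x‖ ^ 2 := by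
  have h := norm_exp d x (-x 0) (-x 1)
  have : 0 ≤ ‖x + (-x 0) • e d 0 + (-x 1) • e d 1‖ ^ 2 := by positivity
  nlinarith

lemma norm_sub_star (d : ℕ) {lam : ℝ} (h0 : 0 ≤ lam) (h1 : lam < 1) (x : Euc d) :
    ‖x - xStar d lam‖ ^ 2 = ‖x‖ ^ 2 - 2 * (Real.sqrt (1 - lam ^ 2) * x 0 + lam * x 1) + 1 := by
  have hs := Real.sq_sqrt (sq_pos_aux h0 h1).le
  have : x - xStar d lam = x + (-Real.sqrt (1 - lam ^ 2)) • e d 0 + (-lam) • e d 1 := by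
    unfold xStar; module
  rw [this, norm_exp]
  linear_combination hs

lemma xS_zero (d : ℕ) (lam : ℝ) : xStar d lam 0 = Real.sqrt (1 - lam ^ 2) := by
  simp [xStar, e]

lemma xS_one (d : ℕ) (lam : ℝ) : xStar d lam 1 = lam := by
  simp [xStar, e]

lemma DR_eq (d : ℕ) (lam : ℝ) (x : Euc d) :
    DR d lam x = (1 - 1 / ‖x‖) • x + (x 0 / ‖x‖ - (1 - 1 / ‖x‖) * x 0) • e d 0 + lam • e d 1 := by
  ext j
  simp only [DR, PiLp.add_apply, PiLp.smul_apply, smul_eq_mul, WithLp.ofLp_sum, Finset.sum_apply,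
    WithLp.ofLp_smul, Pi.smul_apply]
  have hsum : ∑ i ∈ Finset.univ.filter (fun j : Fin (d + 2) => 2 ≤ (j : ℕ)),
      (1 - 1 / ‖x‖) * x i * e d i j = if 2 ≤ (j : ℕ) then (1 - 1 / ‖x‖) * x j else 0 := by
    rw [Finset.sum_filter]
    rw [Finset.sum_eq_single j]
    · simp [e_self]
    · intro b _ hb
      rw [e_ne d hb.symm]; simp
    · simp
  rw [hsum]
  by_cases hj0 : j = 0
  · subst hj0
    rw [e_self, e_ne d (by simp)]
    simp
  by_cases hj1 : j = 1
  · subst hj1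
    rw [e_self, e_ne d (by simp)]
    simp
  have : 2 ≤ (j : ℕ) := by
    have a0 : (j : ℕ) ≠ 0 := fun h => hj0 (Fin.ext h)
    have a1 : (j : ℕ) ≠ 1 := fun h => hj1 (Fin.ext (by simpa using h))
    omega
  rw [e_ne d hj0, e_ne d hj1, if_pos this]
  simp

def hh (a : ℝ) : ℝ := Real.sqrt (1 - a ^ 2) - Real.log (1 + Real.sqrt (1 - a ^ 2))

def Vt (d : ℕ) (lam : ℝ) (x : Euc d) : ℝ :=
  ‖x‖ - lam * x 1 + (lam ^ 2 - 1) / 2 - x 0 ^ 2 / ‖x‖ + x 0 ^ 2 / 2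
    + lam * (hh (x 0) - hh (x 0 / ‖x‖)) + (lam - 1) * Real.log ‖x‖

lemma norm_pos_of (d : ℕ) {x : Euc d} (h : 0 < x 0) : 0 < ‖x‖ := by
  rw [norm_pos_iff]; rintro rfl; simp at h

lemma W_eq (d : ℕ) (lam : ℝ) {x : Euc d} (hx : x ∈ Delta d) : W d lam x = Vt d lam x := by
  have hr := norm_pos_of d hx.1
  have e1 : ‖x - lam • e d 1‖ ^ 2 = ‖x‖ ^ 2 - 2 * lam * x 1 + lam ^ 2 := by
    have : x - lam • e d 1 = x + (0 : ℝ) • e d 0 + (-lam) • e d 1 := by module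
    rw [this, norm_exp]; ring
  have e2 : ‖DR d lam x - lam • e d 1‖ ^ 2 = (‖x‖ - 1) ^ 2 + x 0 ^ 2 * (2 / ‖x‖ - 1) := by
    have : DR d lam x - lam • e d 1 =
      (1 - 1 / ‖x‖) • x + (x 0 / ‖x‖ - (1 - 1 / ‖x‖) * x 0) • e d 0 + (0 : ℝ) • e d 1 := by
      rw [DR_eq]; module
    rw [this, norm_exp, norm_smul, mul_pow, Real.norm_eq_abs, sq_abs]
    simp only [PiLp.smul_apply, smul_eq_mul]
    field_simp
    ring
  have e3 : DR d lam x 0 = x 0 / ‖x‖ := by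
    rw [DR_eq]
    simp [e]
  unfold W F
  rw [e1, e2, e3, Real.log_div hx.1.ne' hr.ne']
  unfold Vt hh
  field_simp
  ring

lemma sqrt_inv_aux {a : ℝ} (h0 : 0 < a) (h1 : a ≤ 1) :
    0 ≤ Real.sqrt (1 - a ^ 2) ∧ Real.sqrt (1 - a ^ 2) < 1 ∧
      Real.sqrt (1 - a ^ 2) ^ 2 = 1 - a ^ 2 ∧
      Real.log (1 - Real.sqrt (1 - a ^ 2)) = 2 * Real.log a - Real.log (1 + Real.sqrt (1 - a ^ 2)) ∧
      Real.sqrt (1 - Real.sqrt (1 - a ^ 2) ^ 2) = a := by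
  have hs : Real.sqrt (1 - a ^ 2) ^ 2 = 1 - a ^ 2 := Real.sq_sqrt (by nlinarith)
  have hs0 := Real.sqrt_nonneg (1 - a ^ 2)
  have hs1 : Real.sqrt (1 - a ^ 2) < 1 := by
    rw [Real.sqrt_lt' one_pos]; nlinarith
  refine ⟨hs0, hs1, hs, ?_, ?_⟩
  · rw [eq_sub_iff_add_eq, ← Real.log_mul (by linarith) (by positivity)]
    have : (1 - Real.sqrt (1 - a ^ 2)) * (1 + Real.sqrt (1 - a ^ 2)) = a ^ 2 := by
      linear_combination -hs
    rw [this, Real.log_pow]; simp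
  · rw [hs, sub_sub_cancel, Real.sqrt_sq h0.le]

lemma V_eq_Wsc (d : ℕ) (lam : ℝ) {x : Euc d} (hx : x ∈ Delta d) :
    Vt d lam x = Wsc lam (Real.sqrt (1 - x 0 ^ 2)) (Real.sqrt (1 - (x 0 / ‖x‖) ^ 2))
      + lam * (‖x‖ * Real.sqrt (1 - (x 0 / ‖x‖) ^ 2) - x 1) := by
  have hr := norm_pos_of d hx.1
  have hbpos : 0 < x 0 / ‖x‖ := div_pos hx.1 hr
  have hb1 : x 0 / ‖x‖ ≤ 1 := by
    rw [div_le_one hr]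
    refine (sq_le_sq₀ hx.1.le hr.le).1 ?_
    nlinarith [norm_sq_ge d x]
  obtain ⟨-, -, a3, a4, a5⟩ := sqrt_inv_aux hx.1 hx.2
  obtain ⟨-, -, b3, b4, b5⟩ := sqrt_inv_aux hbpos hb1
  unfold Wsc PhiS Vt hh
  rw [a4, a5, b4, b5, Real.log_div hx.1.ne' hr.ne']
  have hq : x 0 / (x 0 / ‖x‖) = ‖x‖ := by
    have := hx.1.ne'
    field_simp
  have hq2 : x 0 ^ 2 / ‖x‖ = ‖x‖ * (x 0 / ‖x‖) ^ 2 := by field_simp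
  rw [hq, hq2]
  set s := Real.sqrt (1 - x 0 ^ 2)
  set c := Real.sqrt (1 - (x 0 / ‖x‖) ^ 2)
  linear_combination (1 / 2 : ℝ) * a3 - ‖x‖ * b3

def C0 (d : ℕ) : Set (Euc d) := {x | 0 ≤ x 0 ∧ x 0 ≤ 1 ∧ x ≠ 0}

lemma V_pos (d : ℕ) {lam : ℝ} (h0 : 0 ≤ lam) (h1 : lam < 1) {x : Euc d} (hx : x ∈ C0 d)
    (hne : x ≠ xStar d lam) : 0 < Vt d lam x := by
  obtain ⟨hx0, hx1, hxn⟩ := hx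
  have hr : 0 < ‖x‖ := norm_pos_iff.2 hxn
  have hns := norm_sq_ge d x
  rcases hx0.eq_or_lt with h | h
  · have hy : x 1 ≤ ‖x‖ := by
      refine le_of_abs_le ?_
      exact abs_le_of_sq_le_sq (by nlinarith) hr.le
    have hlog := Real.log_le_sub_one_of_pos hr
    unfold Vt
    rw [← h]
    simp
    nlinarith [mul_nonneg h0 (sub_nonneg.2 hy), mul_nonneg (sub_nonneg.2 h1.le) (sub_nonneg.2 hlog),
      mul_pos (sub_pos.2 h1) (sub_pos.2 h1)]
  · have hD : x ∈ Delta d := ⟨h, hx1⟩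
    rw [V_eq_Wsc d lam hD]
    have hbpos : 0 < x 0 / ‖x‖ := div_pos h hr
    have hb1 : x 0 / ‖x‖ ≤ 1 := by
      rw [div_le_one hr]
      exact (sq_le_sq₀ hx0 hr.le).1 (by nlinarith)
    obtain ⟨a1, a2, a3, a4, a5⟩ := sqrt_inv_aux h hx1
    obtain ⟨b1, b2, b3, b4, b5⟩ := sqrt_inv_aux hbpos hb1
    set s := Real.sqrt (1 - x 0 ^ 2) with hsdef
    set c := Real.sqrt (1 - (x 0 / ‖x‖) ^ 2) with hcdef
    have hrc : (‖x‖ * c) ^ 2 = ‖x‖ ^ 2 - x 0 ^ 2 := by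
      rw [mul_pow, b3]; field_simp
    have hy : x 1 ≤ ‖x‖ * c := by
      refine le_of_abs_le ?_
      exact abs_le_of_sq_le_sq (by nlinarith) (by positivity)
    by_cases hsc : s = lam ∧ c = lam
    · obtain ⟨h2, h3⟩ := hsc
      have h4 : Real.sqrt (1 - lam ^ 2) = x 0 := by rw [← a5, h2]
      have h5 : x 0 / ‖x‖ = x 0 := by rw [← b5, h3, h4]
      have hn1 : ‖x‖ = 1 := by
        field_simp at h5
        nlinarith
      rw [h2, h3, Wsc_self lam h0 h1, hn1]
      rw [hn1, h3] at hy
      have hlt : x 1 ≠ lam ∨ lam = 0 → lam = 0 ∨ x 1 < lam := by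
        rintro (h | h)
        · right; exact lt_of_le_of_ne (by linarith) h
        · left; exact h
      have hstar := norm_sub_star d h0 h1 x
      rw [h4, hn1] at hstar
      have hx02 : x 0 ^ 2 = 1 - lam ^ 2 := by rw [h2] at a3; linarith
      have hpos : 0 < ‖x - xStar d lam‖ ^ 2 := by
        have : 0 < ‖x - xStar d lam‖ := norm_pos_iff.2 (sub_ne_zero.2 hne)
        positivity
      nlinarith
    · have := Wsc_pos h0 h1 a1 a2 b1 b2 hsc
      have := mul_nonneg h0 (sub_nonneg.2 hy)
      linarith

lemma xS_mem (d : ℕ) {lam : ℝ} (h0 : 0 ≤ lam) (h1 : lam < 1) : xStar d lam ∈ Delta d := by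
  constructor
  · rw [xS_zero]; exact sqrt_pos_aux h0 h1
  · rw [xS_zero]; refine Real.sqrt_le_iff.2 ⟨zero_le_one, ?_⟩; nlinarith

lemma V_star (d : ℕ) {lam : ℝ} (h0 : 0 ≤ lam) (h1 : lam < 1) : Vt d lam (xStar d lam) = 0 := by
  have hn : ‖xStar d lam‖ = 1 := by
    have := norm_sub_star d h0 h1 (xStar d lam)
    rw [xS_zero, xS_one, sub_self, norm_zero] at this
    have hs := Real.sq_sqrt (sq_pos_aux h0 h1).le
    have h2 : ‖xStar d lam‖ ^ 2 = 1 := by nlinarith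
    nlinarith [norm_nonneg (xStar d lam)]
  have hs := Real.sq_sqrt (sq_pos_aux h0 h1).le
  unfold Vt
  rw [hn, xS_zero, xS_one]
  simp
  linarith

lemma Delta_sub (d : ℕ) : Delta d ⊆ C0 d := fun x hx => ⟨hx.1.le, hx.2, by
  rintro rfl; exact absurd hx.1 (by simp)⟩

lemma V_nonneg (d : ℕ) {lam : ℝ} (h0 : 0 ≤ lam) (h1 : lam < 1) {x : Euc d} (hx : x ∈ C0 d) :
    0 ≤ Vt d lam x := by
  by_cases h : x = xStar d lam
  · rw [h, V_star d h0 h1]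
  · exact (V_pos d h0 h1 hx h).le

lemma hh_cont : Continuous hh := by
  unfold hh
  have : Continuous fun a : ℝ => Real.sqrt (1 - a ^ 2) := by fun_prop
  refine this.sub (Continuous.log (by fun_prop) ?_)
  intro a
  have := Real.sqrt_nonneg (1 - a ^ 2)
  positivity

lemma V_cont (d : ℕ) (lam : ℝ) : ContinuousOn (Vt d lam) (C0 d) := by
  intro x hx
  apply ContinuousAt.continuousWithinAt
  have hn : ‖x‖ ≠ 0 := norm_ne_zero_iff.2 hx.2.2
  have c0 : ∀ j, ContinuousAt (fun x : Euc d => x j) x := fun j => by fun_prop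
  have cn : ContinuousAt (fun x : Euc d => ‖x‖) x := by fun_prop
  have k1 : ContinuousAt (fun x : Euc d => hh (x 0)) x :=
    hh_cont.continuousAt.comp (c0 0)
  have k2 : ContinuousAt (fun x : Euc d => hh (x 0 / ‖x‖)) x :=
    ContinuousAt.comp (f := fun x : Euc d => x 0 / ‖x‖) hh_cont.continuousAt ((c0 0).div cn hn)
  have k3 := cn.log hn
  have k4 : ContinuousAt (fun x : Euc d => x 0 ^ 2 / ‖x‖) x := ((c0 0).pow 2).div cn hn
  unfold Vt
  exact (((((cn.sub ((c0 1).const_mul lam)).add continuousAt_const).sub k4).add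
    (((c0 0).pow 2).div_const 2)).add ((k1.sub k2).const_mul lam)).add (k3.const_mul _)

lemma hh_bd (a : ℝ) : 0 ≤ hh a ∧ hh a ≤ 1 := by
  unfold hh
  have h0 := Real.sqrt_nonneg (1 - a ^ 2)
  have h1 : Real.sqrt (1 - a ^ 2) ≤ 1 := by
    refine Real.sqrt_le_iff.2 ⟨zero_le_one, ?_⟩; nlinarith [sq_nonneg a]
  have h2 := Real.log_le_sub_one_of_pos (x := 1 + Real.sqrt (1 - a ^ 2)) (by positivity)
  have h3 := Real.log_nonneg (x := 1 + Real.sqrt (1 - a ^ 2)) (by linarith)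
  constructor <;> linarith

lemma V_coercive (d : ℕ) {lam : ℝ} (h0 : 0 ≤ lam) (h1 : lam < 1) {x : Euc d} (hx : x ∈ C0 d) :
    (1 - lam) * (‖x‖ - Real.log ‖x‖) - 3 ≤ Vt d lam x := by
  obtain ⟨hx0, hx1, hxn⟩ := hx
  have hr : 0 < ‖x‖ := norm_pos_iff.2 hxn
  have hns := norm_sq_ge d x
  have hy : x 1 ≤ ‖x‖ := le_of_abs_le (abs_le_of_sq_le_sq (by nlinarith) hr.le)
  have hxr : x 0 ≤ ‖x‖ := le_of_abs_le (abs_le_of_sq_le_sq (by nlinarith) hr.le)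
  have h2 : x 0 ^ 2 / ‖x‖ ≤ 1 := by
    rw [div_le_one hr]; nlinarith
  have h3 : -1 ≤ lam * (hh (x 0) - hh (x 0 / ‖x‖)) := by
    have := (hh_bd (x 0)).1
    have := (hh_bd (x 0 / ‖x‖)).2
    nlinarith
  unfold Vt
  nlinarith [mul_nonneg h0 (sub_nonneg.2 hy), sq_nonneg (x 0), sq_nonneg lam]

lemma sublevel_compact (d : ℕ) {lam : ℝ} (h0 : 0 ≤ lam) (h1 : lam < 1) (M : ℝ) :
    IsCompact {x : Euc d | x ∈ C0 d ∧ Vt d lam x ≤ M} := by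
  set R := (M + 3) / (1 - lam) with hR
  set K : Set (Euc d) := {x | 0 ≤ x 0 ∧ x 0 ≤ 1 ∧ Real.exp (-R) ≤ ‖x‖ ∧ ‖x‖ ≤ 2 * R} with hK
  have hKc : IsClosed K := by
    have c0 : Continuous (fun x : Euc d => x 0) := by fun_prop
    exact (isClosed_le continuous_const c0).inter ((isClosed_le c0 continuous_const).inter
      ((isClosed_le continuous_const continuous_norm).inter
        (isClosed_le continuous_norm continuous_const)))
  have hKcomp : IsCompact K := by
    refine (isCompact_closedBall (0 : Euc d) (2 * R)).of_isClosed_subset hKc ?_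
    intro x hx
    simpa using hx.2.2.2
  have hKC : K ⊆ C0 d := fun x hx => ⟨hx.1, hx.2.1, by
    rintro rfl
    have := hx.2.2.1
    simp at this
    exact absurd this (not_le.2 (Real.exp_pos _))⟩
  have heq : {x : Euc d | x ∈ C0 d ∧ Vt d lam x ≤ M} = K ∩ Vt d lam ⁻¹' Iic M := by
    ext x
    constructor
    · rintro ⟨hx, hM⟩
      refine ⟨?_, hM⟩
      have hr : 0 < ‖x‖ := norm_pos_iff.2 hx.2.2
      have hc := V_coercive d h0 h1 hx
      have h2 : ‖x‖ - Real.log ‖x‖ ≤ R := by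
        rw [hR, le_div_iff₀ (sub_pos.2 h1)]; linarith
      refine ⟨hx.1, hx.2.1, ?_, ?_⟩
      · rw [← Real.le_log_iff_exp_le hr]; linarith
      · have h3 := Real.log_le_sub_one_of_pos (x := ‖x‖ / 2) (by positivity)
        rw [Real.log_div hr.ne' (by norm_num)] at h3
        have := Real.log_two_lt_d9
        linarith
    · rintro ⟨hx, hM⟩
      exact ⟨hKC hx, hM⟩
  rw [heq]
  exact hKcomp.of_isClosed_subset
    ((V_cont d lam).mono hKC |>.preimage_isClosed_of_isClosed hKc isClosed_Iic) inter_subset_left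

lemma perturb (d : ℕ) {lam : ℝ} (h0 : 0 ≤ lam) (h1 : lam < 1) {x : Euc d} (hx : x ∈ C0 d)
    {ε : ℝ} (hε : 0 < ε) : ∃ y ∈ Delta d, ‖x - xStar d lam‖ < ‖y - xStar d lam‖ ∧
      Vt d lam y < Vt d lam x + ε := by
  have hc := V_cont d lam x hx
  have := hc.eventually (gt_mem_nhds (show Vt d lam x < Vt d lam x + ε by linarith))
  rw [eventually_nhdsWithin_iff, Metric.eventually_nhds_iff] at this
  obtain ⟨η, hη, hball⟩ := this
  set δ := min 1 (η / 4) with hδ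
  have hδ0 : 0 < δ := by positivity
  have hδ1 : δ ≤ 1 := min_le_left _ _
  have hδη : δ ≤ η / 4 := min_le_right _ _
  obtain ⟨σ, hσ, hσ2⟩ : ∃ σ : ℝ, 0 ≤ σ * (x 1 - lam) ∧ (σ = 1 ∨ σ = -1) := by
    rcases le_total 0 (x 1 - lam) with h | h
    · exact ⟨1, by linarith, Or.inl rfl⟩
    · exact ⟨-1, by linarith, Or.inr rfl⟩
  have hσsq : σ ^ 2 = 1 := by rcases hσ2 with rfl | rfl <;> norm_num
  set α := max (x 0) (δ ^ 2 / 4) - x 0 with hα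
  have hα0 : 0 ≤ α := sub_nonneg.2 (le_max_left _ _)
  have hα1 : α ≤ δ ^ 2 / 4 := by
    rw [hα, sub_le_iff_le_add]
    exact max_le (by nlinarith [sq_nonneg δ]) (by linarith [hx.1])
  set y : Euc d := x + α • e d 0 + (σ * δ) • e d 1 with hy
  have hy0 : y 0 = max (x 0) (δ ^ 2 / 4) := by
    simp [hy, e, hα]
  have hyD : y ∈ Delta d := by
    constructor
    · rw [hy0]; exact lt_max_of_lt_right (by positivity)
    · rw [hy0]; exact max_le hx.2.1 (by nlinarith)
  refine ⟨y, hyD, ?_, ?_⟩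
  · have h2 : y - xStar d lam = (x - xStar d lam) + α • e d 0 + (σ * δ) • e d 1 := by
      rw [hy]; module
    have h3 : ‖x - xStar d lam‖ ^ 2 < ‖y - xStar d lam‖ ^ 2 := by
      rw [h2, norm_exp]
      simp only [PiLp.sub_apply, xS_zero, xS_one]
      have h4 : Real.sqrt (1 - lam ^ 2) ≤ 1 := by
        refine Real.sqrt_le_iff.2 ⟨zero_le_one, ?_⟩; nlinarith
      have h5 : 0 ≤ 2 * (σ * δ) * (x 1 - lam) := by
        have := mul_nonneg hδ0.le hσ; linarith
      have h6 : (σ * δ) ^ 2 = δ ^ 2 := by rw [mul_pow, hσsq, one_mul]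
      have h7 : - α ≤ α * (x 0 - Real.sqrt (1 - lam ^ 2)) := by
        nlinarith [hx.1]
      have : 0 < δ ^ 2 := by positivity
      nlinarith [sq_nonneg α]
    exact lt_of_pow_lt_pow_left₀ 2 (norm_nonneg _) h3
  · refine hball ?_ (Delta_sub d hyD)
    rw [dist_eq_norm]
    have h2 : y - x = α • e d 0 + (σ * δ) • e d 1 := by rw [hy]; module
    have hn : ∀ j, ‖e d j‖ = 1 := by intro j; simp [e]
    rw [h2]
    refine (norm_add_le _ _).trans_lt ?_
    rw [norm_smul, norm_smul, hn, hn, Real.norm_eq_abs, Real.norm_eq_abs, abs_of_nonneg hα0, abs_mul,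
      abs_of_pos hδ0]
    have : |σ| = 1 := by rcases hσ2 with rfl | rfl <;> simp
    rw [this]
    nlinarith

lemma g_bdd (d : ℕ) {lam : ℝ} (h0 : 0 ≤ lam) (h1 : lam < 1) (t : ℝ) :
    BddBelow {w : ℝ | ∃ x : Euc d, x ∈ Delta d ∧ t ≤ ‖x - xStar d lam‖ ∧ w = W d lam x} := by
  refine ⟨0, ?_⟩
  rintro w ⟨x, hx, -, rfl⟩
  rw [W_eq d lam hx]
  exact V_nonneg d h0 h1 (Delta_sub d hx)

lemma g_nonempty (d : ℕ) {lam : ℝ} (h0 : 0 ≤ lam) (h1 : lam < 1) (t : ℝ) :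
    {w : ℝ | ∃ x : Euc d, x ∈ Delta d ∧ t ≤ ‖x - xStar d lam‖ ∧ w = W d lam x}.Nonempty := by
  have hs := xS_mem d h0 h1
  refine ⟨_, xStar d lam + |t| • e d 1, ?_, ?_, rfl⟩
  · have : (xStar d lam + |t| • e d 1) 0 = xStar d lam 0 := by simp [e]
    unfold Delta
    rw [mem_ofPred_eq, this]
    exact hs
  · have hn : ‖e d 1‖ = 1 := by simp [e]
    rw [add_sub_cancel_left, norm_smul, hn]
    simpa using le_abs_self t

lemma g_le (d : ℕ) {lam : ℝ} (h0 : 0 ≤ lam) (h1 : lam < 1) {t : ℝ} {x : Euc d}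
    (hx : x ∈ Delta d) (ht : t ≤ ‖x - xStar d lam‖) : g d lam t ≤ Vt d lam x :=
  csInf_le (g_bdd d h0 h1 t) ⟨x, hx, ht, (W_eq d lam hx).symm⟩

lemma le_g (d : ℕ) {lam : ℝ} (h0 : 0 ≤ lam) (h1 : lam < 1) {t m : ℝ}
    (h : ∀ x ∈ Delta d, t ≤ ‖x - xStar d lam‖ → m ≤ Vt d lam x) : m ≤ g d lam t := by
  refine le_csInf (g_nonempty d h0 h1 t) ?_
  rintro w ⟨x, hx, ht, rfl⟩
  rw [W_eq d lam hx]
  exact h x hx ht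

lemma g_mono (d : ℕ) {lam : ℝ} (h0 : 0 ≤ lam) (h1 : lam < 1) {s t : ℝ} (hst : s ≤ t) :
    g d lam s ≤ g d lam t :=
  le_g d h0 h1 fun _ hx ht => g_le d h0 h1 hx (hst.trans ht)

lemma g_cont (d : ℕ) {lam : ℝ} (h0 : 0 ≤ lam) (h1 : lam < 1) : Continuous (g d lam) := by
  rw [continuous_iff_continuousAt]
  intro t
  rw [ContinuousAt, tendsto_order]
  constructor
  · intro m hm
    set M := (m + g d lam t) / 2 with hM
    have hmM : m < M := by linarith
    have hMg : M < g d lam t := by linarith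
    have hKc := sublevel_compact d h0 h1 M
    set K := {x : Euc d | x ∈ C0 d ∧ Vt d lam x ≤ M}
    have hlt : ∃ r < t, ∀ x ∈ K, ‖x - xStar d lam‖ ≤ r := by
      rcases K.eq_empty_or_nonempty with he | hne
      · exact ⟨t - 1, by linarith, by rw [he]; simp⟩
      · obtain ⟨z, hz, hmax⟩ := hKc.exists_isMaxOn (f := fun x => ‖x - xStar d lam‖) hne
          (by fun_prop)
        refine ⟨‖z - xStar d lam‖, ?_, fun x hx => hmax hx⟩
        by_contra hcon
        push Not at hcon
        obtain ⟨y, hy, hy1, hy2⟩ := perturb d h0 h1 hz.1 (sub_pos.2 hMg)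
        have := g_le d h0 h1 hy (hcon.trans hy1.le)
        linarith [hz.2]
    obtain ⟨r, hrt, hr⟩ := hlt
    filter_upwards [lt_mem_nhds hrt] with u hu
    refine hmM.trans_le (le_g d h0 h1 fun x hx hxu => ?_)
    by_contra hcon
    push Not at hcon
    have := hr x ⟨Delta_sub d hx, hcon.le⟩
    linarith
  · intro m hm
    obtain ⟨w, ⟨x, hx, hxt, rfl⟩, hw⟩ := exists_lt_of_csInf_lt (g_nonempty d h0 h1 t) hm
    rw [W_eq d lam hx] at hw
    obtain ⟨y, hy, hy1, hy2⟩ := perturb d h0 h1 (Delta_sub d hx) (sub_pos.2 hw)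
    filter_upwards [gt_mem_nhds (hxt.trans_lt hy1)] with u hu
    have := g_le d h0 h1 hy hu.le
    linarith

lemma g_pos (d : ℕ) {lam : ℝ} (h0 : 0 ≤ lam) (h1 : lam < 1) {t : ℝ} (ht : 0 < t) :
    0 < g d lam t := by
  have hKc := (sublevel_compact d h0 h1 1).inter_right
    (isClosed_le (continuous_const (y := t))
      (show Continuous fun x : Euc d => ‖x - xStar d lam‖ by fun_prop))
  set K := {x : Euc d | x ∈ C0 d ∧ Vt d lam x ≤ 1} ∩ {x | t ≤ ‖x - xStar d lam‖}
  have hm : ∃ m > 0, ∀ x ∈ K, m ≤ Vt d lam x := by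
    rcases K.eq_empty_or_nonempty with he | hne
    · exact ⟨1, one_pos, by rw [he]; simp⟩
    · obtain ⟨z, hz, hmin⟩ := hKc.exists_isMinOn hne
        ((V_cont d lam).mono fun x hx => hx.1.1)
      refine ⟨Vt d lam z, V_pos d h0 h1 hz.1.1 ?_, fun x hx => hmin hx⟩
      rintro rfl
      have := hz.2
      simp at this
      linarith
  obtain ⟨m, hm, hK⟩ := hm
  refine lt_of_lt_of_le (lt_min hm one_pos) (le_g d h0 h1 fun x hx hxt => ?_)
  rcases le_total (Vt d lam x) 1 with h | h
  · exact (min_le_left _ _).trans (hK x ⟨⟨Delta_sub d hx, h⟩, hxt⟩)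
  · exact (min_le_right _ _).trans h

/-- For `λ ∈ [0,1)`, the function `g : [0,∞) → ℝ` is non-decreasing,
non-negative, continuous, and positive definite: `g(t) = 0` iff `t = 0`. -/
theorem stmt7 (d : ℕ) (lam : ℝ) (h0 : 0 ≤ lam) (h1 : lam < 1) :
    (∀ s t : ℝ, 0 ≤ s → s ≤ t → g d lam s ≤ g d lam t) ∧
    (∀ t : ℝ, 0 ≤ t → 0 ≤ g d lam t) ∧
    ContinuousOn (g d lam) (Ici 0) ∧
    (∀ t : ℝ, 0 ≤ t → (g d lam t = 0 ↔ t = 0)) := by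
  have hnn : ∀ t : ℝ, 0 ≤ g d lam t := fun t =>
    le_g d h0 h1 fun x hx _ => V_nonneg d h0 h1 (Delta_sub d hx)
  refine ⟨fun s t _ hst => g_mono d h0 h1 hst, fun t _ => hnn t, (g_cont d h0 h1).continuousOn,
    fun t ht => ⟨fun hg => ?_, ?_⟩⟩
  · by_contra hne
    exact (g_pos d h0 h1 (lt_of_le_of_ne ht (Ne.symm hne))).ne' hg
  · rintro rfl
    refine le_antisymm ?_ (hnn 0)
    have h := g_le d h0 h1 (t := 0) (xS_mem d h0 h1) (norm_nonneg _)
    rwa [V_star d h0 h1] at h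
end
end
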